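/- (Theorem 24) Let 0 < θ₀ < θ₁ < 1, 0 < q₀, r, r₁, r₀ ≤ ∞, a, a₀, b₀, b₁ ∈ SV, and ‖s^{-1/r₀} b₀(s)/a₀(s)‖_{r₀,(0,1)} < ∞. Put c₀(t) = a₀(t) ‖s^{-1/r₀} b₀(s)/a₀(s)‖_{r₀,(0,t)} and ρ(t) = t^{θ₁-θ₀} c₀(t)/b₁(t). (i) If 0 < θ < 1 then (Ā^𝓡_{θ₀,r₀,b₀,q₀,a₀}, Ā_{θ₁,r₁;b₁})_{θ,r;a} ≅ Ā_{η,r;a^#}, where η = (1-θ)θ₀ + θθ₁ and a^#(t) = c₀(t)^{1-θ} b₁(t)^θ a(ρ(t)). (ii) If additionally ‖s^{-1/r} a(s)‖_{r,(0,1)} < ∞, then (Ā^𝓡_{θ₀,r₀,b₀,q₀,a₀}, Ā_{θ₁,r₁;b₁})_{1,r;a} ≅ Ā^𝓡_{θ₁,r,a^#,r₁,b₁}, where a^#(t) = b₁(t) a(ρ(t)). -/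

import Mathlib

open MeasureTheory Set ENNReal Filter

noncomputable section

/-- The `L_q` quasi-norm (with respect to Lebesgue measure) of an `ℝ≥0∞`-valued
function over a set of reals; for `q = ∞` it is the essential supremum. -/
def LqNorm (q : ℝ≥0∞) (s : Set ℝ) (g : ℝ → ℝ≥0∞) : ℝ≥0∞ :=
  if q = ∞ then essSup g (volume.restrict s)
  else (∫⁻ t in s, g t ^ q.toReal) ^ q⁻¹.toReal

/-- The weight `s ↦ s ^ (-1/r) * b s`, as an `ℝ≥0∞`-valued function
(`1/∞ = 0` by convention). -/
def svWgt (r : ℝ≥0∞) (b : ℝ → ℝ) : ℝ → ℝ≥0∞ :=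
  fun s => ENNReal.ofReal (s ^ (-(r⁻¹.toReal)) * b s)

/-- `f` and `g` are equivalent on `s`: each is bounded by a constant multiple
of the other there. -/
def EquivOn (s : Set ℝ) (f g : ℝ → ℝ) : Prop :=
  ∃ C : ℝ, 0 < C ∧ ∀ t ∈ s, C⁻¹ * g t ≤ f t ∧ f t ≤ C * g t

/-- A positive measurable function `b` on `(0,∞)` is slowly varying if for every
`ε > 0`, `t ^ ε * b t` is equivalent to a non-decreasing function and
`t ^ (-ε) * b t` is equivalent to a non-increasing function. -/
def SlowlyVarying (b : ℝ → ℝ) : Prop :=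
  AEMeasurable b (volume.restrict (Ioi 0)) ∧ (∀ t ∈ Ioi (0:ℝ), 0 < b t) ∧
    ∀ ε : ℝ, 0 < ε →
      (∃ g : ℝ → ℝ, MonotoneOn g (Ioi 0) ∧ EquivOn (Ioi 0) (fun t => t ^ ε * b t) g) ∧
      (∃ g : ℝ → ℝ, AntitoneOn g (Ioi 0) ∧ EquivOn (Ioi 0) (fun t => t ^ (-ε) * b t) g)

/-- A quasi-Banach space continuously embedded into the ambient (Hausdorff) space `E`,
recorded via its extended-real-valued quasi-norm; the space itself is the set of
vectors of finite quasi-norm. -/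
structure QuasiBanach (E : Type*) [AddCommGroup E] [Module ℝ E] where
  N : E → ℝ≥0∞
  zero : N 0 = 0
  definite : ∀ x, N x = 0 → x = 0
  smul : ∀ (c : ℝ) (x : E), N (c • x) = ENNReal.ofReal |c| * N x
  quasi : ∃ C : ℝ≥0∞, 1 ≤ C ∧ C ≠ ∞ ∧ ∀ x y, N (x + y) ≤ C * (N x + N y)
  complete : ∀ f : ℕ → E,
    (∀ ε : ℝ≥0∞, 0 < ε → ∃ M : ℕ, ∀ m ≥ M, ∀ n ≥ M, N (f m - f n) < ε) →
    (∀ n, N (f n) ≠ ∞) →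
    ∃ g : E, N g ≠ ∞ ∧ Tendsto (fun n => N (f n - g)) atTop (nhds 0)

variable {E : Type*} [AddCommGroup E] [Module ℝ E]

/-- The Peetre K-functional of the couple whose quasi-norms are `N₀`, `N₁`. -/
def Kf (N₀ N₁ : E → ℝ≥0∞) (t : ℝ) (f : E) : ℝ≥0∞ :=
  ⨅ g : E, N₀ g + ENNReal.ofReal t * N₁ (f - g)

/-- The quasi-norm of the real interpolation space `Ā_{θ,q;b}`. -/
def normK (N₀ N₁ : E → ℝ≥0∞) (θ : ℝ) (q : ℝ≥0∞) (b : ℝ → ℝ) (f : E) : ℝ≥0∞ :=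
  LqNorm q (Ioi 0) fun u =>
    ENNReal.ofReal (u ^ (-θ - q⁻¹.toReal) * b u) * Kf N₀ N₁ u f

/-- The quasi-norm of the limiting interpolation space `Ā^𝓛_{σ,r,b,q,a}`. -/
def normL (N₀ N₁ : E → ℝ≥0∞) (σ : ℝ) (r q : ℝ≥0∞) (b a : ℝ → ℝ) (f : E) : ℝ≥0∞ :=
  LqNorm r (Ioi 0) fun t =>
    ENNReal.ofReal (t ^ (-(r⁻¹.toReal)) * (b t / a t)) *
      LqNorm q (Ioo 0 t) fun u =>
        ENNReal.ofReal (u ^ (-σ - q⁻¹.toReal) * a u) * Kf N₀ N₁ u f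

/-- The quasi-norm of the limiting interpolation space `Ā^𝓡_{σ,r,b,q,a}`. -/
def normR (N₀ N₁ : E → ℝ≥0∞) (σ : ℝ) (r q : ℝ≥0∞) (b a : ℝ → ℝ) (f : E) : ℝ≥0∞ :=
  LqNorm r (Ioi 0) fun t =>
    ENNReal.ofReal (t ^ (-(r⁻¹.toReal)) * (b t / a t)) *
      LqNorm q (Ioi t) fun u =>
        ENNReal.ofReal (u ^ (-σ - q⁻¹.toReal) * a u) * Kf N₀ N₁ u f

/-- Two (extended-real-valued) quasi-norms define the same space with
equivalent quasi-norms. -/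
def EquivNorms (nX nY : E → ℝ≥0∞) : Prop :=
  ∃ C : ℝ≥0∞, 0 < C ∧ C ≠ ∞ ∧ ∀ f : E, C⁻¹ * nY f ≤ nX f ∧ nX f ≤ C * nY f

/-! Sampling at the dyadic points `2 ^ n` turns every quasi-norm of the theorem into a weighted
`ℓ_q(ℤ)` quasi-norm of `n ↦ K(2 ^ n, f)`. By Potter's bounds the dyadic weights are geometric up to
an arbitrarily small error in the exponent, so that the Hardy inequalities become summations of a
geometric kernel. The space `X₀ = Ā^𝓡_{θ₀,r₀,b₀,q₀,a₀}` behaves like a space of exponent `θ₀` and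
slowly varying factor `c₀`, except that the upper bound of its quasi-norm by
`sup u ^ (-θ₀) c₀(u) K(u, f)` loses a small geometric factor. With `X₁ = Ā_{θ₁,r₁;b₁}`, a
Holmstedt argument then gives `K(ρ(t), f; X₀, X₁)` as a lossy supremum over `u ≤ t` plus
`ρ(t) ‖u ^ (-θ₁ - 1 / r₁) b₁(u) K(u, f)‖_{r₁, (t, ∞)}`. After the change of variables `t ↦ ρ(t)`
the supremum is absorbed by the geometric decay of `ρ(t) ^ (-θ) a(ρ(t))`, which leaves an
`𝓡`-quasi-norm for every `θ > 0`; for `θ < 1` a further Hardy inequality collapses it to the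
quasi-norm of `Ā_{η,r;a^#}`. -/

open scoped NNReal

/-! ### Domination up to a constant -/

/-- The relation `F ≲ G`: `F` is bounded by a constant multiple of `G`, uniformly in the index.
Constants live in `ℝ≥0`, so that their finiteness never has to be recorded. -/
def Dominated {ι : Type*} (F G : ι → ℝ≥0∞) : Prop :=
  ∃ C : ℝ≥0, ∀ i, F i ≤ C * G i

/-- The relation `F ≲≳ G`: each function dominates the other. -/
def Comparable {ι : Type*} (F G : ι → ℝ≥0∞) : Prop :=
  Dominated F G ∧ Dominated G F

local infix:50 " ≲ " => Dominated

local infix:50 " ≲≳ " => Comparable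

section Domination

variable {ι κ : Type*} {F G H F' G' : ι → ℝ≥0∞}

namespace Dominated

theorem of_le (h : ∀ i, F i ≤ G i) : F ≲ G := ⟨1, by simpa using h⟩

theorem trans : F ≲ G → G ≲ H → F ≲ H := by
  rintro ⟨C, hC⟩ ⟨D, hD⟩
  refine ⟨C * D, fun i => (hC i).trans ?_⟩
  rw [ENNReal.coe_mul, mul_assoc]
  gcongr
  exact hD i

instance : Trans (Dominated (ι := ι)) (Dominated (ι := ι)) (Dominated (ι := ι)) := ⟨trans⟩

theorem mul : F ≲ G → F' ≲ G' → (fun i => F i * F' i) ≲ fun i => G i * G' i := by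
  rintro ⟨C, hC⟩ ⟨D, hD⟩
  refine ⟨C * D, fun i => (mul_le_mul' (hC i) (hD i)).trans ?_⟩
  rw [ENNReal.coe_mul, mul_mul_mul_comm]

theorem mul_left (K : ι → ℝ≥0∞) (h : F ≲ G) : (fun i => K i * F i) ≲ fun i => K i * G i :=
  (of_le fun _ => le_rfl).mul h

theorem mul_right (K : ι → ℝ≥0∞) (h : F ≲ G) : (fun i => F i * K i) ≲ fun i => G i * K i :=
  h.mul (of_le fun _ => le_rfl)

theorem add : F ≲ G → F' ≲ G' → (fun i => F i + F' i) ≲ fun i => G i + G' i := by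
  rintro ⟨C, hC⟩ ⟨D, hD⟩
  refine ⟨C ⊔ D, fun i => ?_⟩
  rw [mul_add]
  exact add_le_add ((hC i).trans (by gcongr; exact le_sup_left))
    ((hD i).trans (by gcongr; exact le_sup_right))

theorem add_le (h : F ≲ H) (h' : G ≲ H) : (fun i => F i + G i) ≲ H :=
  (h.add h').trans ⟨2, fun i => by rw [ENNReal.coe_ofNat, two_mul]⟩

theorem comp (h : F ≲ G) (φ : κ → ι) : (fun k => F (φ k)) ≲ fun k => G (φ k) :=
  h.imp fun _ hC k => hC (φ k)

theorem of_cases {p : ι → Prop} (h : (fun i : {i // p i} => F i) ≲ fun i => G i)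
    (h' : (fun i : {i // ¬p i} => F i) ≲ fun i => G i) : F ≲ G := by
  obtain ⟨C, hC⟩ := h
  obtain ⟨D, hD⟩ := h'
  refine ⟨C ⊔ D, fun i => ?_⟩
  by_cases hi : p i
  · exact (hC ⟨i, hi⟩).trans (by gcongr; exact le_sup_left)
  · exact (hD ⟨i, hi⟩).trans (by gcongr; exact le_sup_right)

theorem iSup {F G : ι → κ → ℝ≥0∞} (h : F.uncurry ≲ G.uncurry) :
    (fun i => ⨆ k, F i k) ≲ fun i => ⨆ k, G i k := by
  obtain ⟨C, hC⟩ := h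
  refine ⟨C, fun i => ?_⟩
  rw [ENNReal.mul_iSup]
  exact iSup_mono fun k => hC (i, k)

theorem iInf_right [Nonempty κ] {G : ι → κ → ℝ≥0∞} (h : (fun p : ι × κ => F p.1) ≲ G.uncurry) :
    F ≲ fun i => ⨅ k, G i k := by
  obtain ⟨C, hC⟩ := h
  refine ⟨C, fun i => ?_⟩
  rw [ENNReal.mul_iInf fun h => absurd h coe_ne_top]
  exact le_iInf fun k => hC (i, k)

end Dominated

namespace Comparable

theorem symm (h : F ≲≳ G) : G ≲≳ F := ⟨h.2, h.1⟩

theorem trans (h : F ≲≳ G) (h' : G ≲≳ H) : F ≲≳ H := ⟨h.1.trans h'.1, h'.2.trans h.2⟩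

theorem mul_left (K : ι → ℝ≥0∞) (h : F ≲≳ G) : (fun i => K i * F i) ≲≳ fun i => K i * G i :=
  ⟨h.1.mul_left K, h.2.mul_left K⟩

theorem comp (h : F ≲≳ G) (φ : κ → ι) : (fun k => F (φ k)) ≲≳ fun k => G (φ k) :=
  ⟨h.1.comp φ, h.2.comp φ⟩

theorem equivNorms {E : Type*} {nX nY : E → ℝ≥0∞} (h : nX ≲≳ nY) : EquivNorms nX nY := by
  obtain ⟨⟨C, hC⟩, D, hD⟩ := h
  have hpos : (0 : ℝ≥0∞) < (C ⊔ D ⊔ 1 : ℝ≥0) := mod_cast one_pos.trans_le le_sup_right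
  refine ⟨(C ⊔ D ⊔ 1 : ℝ≥0), hpos, coe_ne_top, fun f => ⟨?_, ?_⟩⟩
  · rw [ENNReal.inv_mul_le_iff hpos.ne' coe_ne_top]
    exact (hD f).trans (by gcongr; exact le_sup_right.trans le_sup_left)
  · exact (hC f).trans (by gcongr; exact le_sup_left.trans le_sup_left)

end Comparable

end Domination

/-! ### Weighted sequence spaces over the integers -/

/-- The quasi-norm of `ℓ_q(ℤ)`, in which the interpolation norms are computed after sampling. -/
def lq (q : ℝ≥0∞) (x : ℤ → ℝ≥0∞) : ℝ≥0∞ :=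
  eLpNorm x q Measure.count

section SequenceSpace

variable {ι : Type*} {q : ℝ≥0∞} {x y : ℤ → ℝ≥0∞}

theorem lq_top (x : ℤ → ℝ≥0∞) : lq ∞ x = ⨆ n, x n := by
  simp [lq, eLpNorm_exponent_top, eLpNormEssSup_eq_essSup_enorm]

theorem lq_eq_tsum (hq : q ≠ 0) (hq' : q ≠ ∞) (x : ℤ → ℝ≥0∞) :
    lq q x = (∑' n, x n ^ q.toReal) ^ (1 / q.toReal) := by
  simp [lq, eLpNorm_eq_lintegral_rpow_enorm_toReal hq hq', lintegral_count]

theorem lq_mono (h : ∀ n, x n ≤ y n) : lq q x ≤ lq q y :=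
  eLpNorm_mono_enorm h

theorem Dominated.lq {F G : ι → ℤ → ℝ≥0∞} (h : F.uncurry ≲ G.uncurry) :
    (fun i => lq q (F i)) ≲ fun i => lq q (G i) := by
  obtain ⟨C, hC⟩ := h
  exact ⟨C, fun i => eLpNorm_le_mul_eLpNorm_of_ae_le_mul' (ae_of_all _ fun n => hC (i, n)) q⟩

theorem Comparable.lq {F G : ι → ℤ → ℝ≥0∞} (h : F.uncurry ≲≳ G.uncurry) :
    (fun i => lq q (F i)) ≲≳ fun i => lq q (G i) :=
  ⟨h.1.lq, h.2.lq⟩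

theorem lq_const_mul (hq : q ≠ 0) (c : ℝ≥0∞) (x : ℤ → ℝ≥0∞) :
    lq q (fun n => c * x n) = c * lq q x := by
  rcases eq_or_ne q ∞ with rfl | hq'
  · simp only [lq_top, ENNReal.mul_iSup]
  have hpos : 0 < q.toReal := toReal_pos hq hq'
  simp only [lq_eq_tsum hq hq', ENNReal.mul_rpow_of_nonneg _ _ hpos.le, ENNReal.tsum_mul_left]
  rw [ENNReal.mul_rpow_of_nonneg _ _ (one_div_nonneg.2 hpos.le), one_div,
    ENNReal.rpow_rpow_inv hpos.ne']

theorem lq_indicator_const_mul (hq : q ≠ 0) (P : Set ℤ) (c : ℝ≥0∞) (x : ℤ → ℝ≥0∞) :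
    lq q (P.indicator fun n => c * x n) = c * lq q (P.indicator x) := by
  simp only [← lq_const_mul hq, ← indicator_const_mul]

theorem le_lq (hq : q ≠ 0) (x : ℤ → ℝ≥0∞) (n : ℤ) : x n ≤ lq q x := by
  rcases eq_or_ne q ∞ with rfl | hq'
  · exact (le_iSup x n).trans_eq (lq_top x).symm
  · rw [lq_eq_tsum hq hq', one_div, ENNReal.le_rpow_inv_iff (toReal_pos hq hq')]
    exact ENNReal.le_tsum n

theorem le_lq_indicator_Ici (hq : q ≠ 0) (x : ℤ → ℝ≥0∞) (n : ℤ) :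
    x n ≤ lq q ((Ici n).indicator x) :=
  (indicator_of_mem self_mem_Ici x).symm.trans_le (le_lq hq _ n)

theorem lq_add_dominated (F G : ι → ℤ → ℝ≥0∞) :
    (fun i => lq q fun n => F i n + G i n) ≲ fun i => lq q (F i) + lq q (G i) := by
  refine ⟨(LpAddConst q).toNNReal, fun i => ?_⟩
  rw [coe_toNNReal (LpAddConst_lt_top q).ne]
  exact eLpNorm_add_le' Measurable.of_discrete.aestronglyMeasurable
    Measurable.of_discrete.aestronglyMeasurable q

theorem lq_comp_dominated {σ : ℤ → ℤ} {D : ℕ} (hσ : ∀ k, (σ ⁻¹' {k}).encard ≤ D) :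
    (fun x : ℤ → ℝ≥0∞ => lq q fun n => x (σ n)) ≲ lq q := by
  have hmap : Measure.map σ Measure.count ≤ ((D + 1 : ℕ) : ℝ≥0∞) • Measure.count := by
    refine Measure.le_iff.2 fun s hs => ?_
    rw [← Measure.tsum_indicator_apply_singleton _ s hs,
      ← Measure.tsum_indicator_apply_singleton _ s hs]
    refine ENNReal.tsum_le_tsum fun k => indicator_le_indicator ?_
    rw [Measure.map_apply .of_discrete (measurableSet_singleton k),
      Measure.count_apply .of_discrete, Measure.smul_apply, Measure.count_singleton, smul_eq_mul,
      mul_one]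
    exact_mod_cast ENat.toENNReal_le.2 ((hσ k).trans (Nat.cast_le.2 D.le_succ))
  refine ⟨((D + 1 : ℕ) : ℝ≥0) ^ (1 / q).toReal, fun x => ?_⟩
  calc eLpNorm (x ∘ σ) q Measure.count = eLpNorm x q (Measure.map σ Measure.count) :=
        (eLpNorm_map_measure Measurable.of_discrete.aestronglyMeasurable
          Measurable.of_discrete.aemeasurable).symm
    _ ≤ eLpNorm x q (((D + 1 : ℕ) : ℝ≥0∞) • Measure.count) := eLpNorm_mono_measure x hmap
    _ = _ := by
        rw [eLpNorm_smul_measure_of_ne_zero (by simp), ENNReal.coe_rpow_of_nonneg _ toReal_nonneg,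
          ENNReal.coe_natCast, smul_eq_mul, lq]

theorem lq_comp_sub (x : ℤ → ℝ≥0∞) (m : ℤ) : (lq q fun n => x (n - m)) = lq q x :=
  eLpNorm_comp_measurePreserving Measurable.of_discrete.aestronglyMeasurable
    (measurePreserving_sub_right Measure.count m)

theorem lq_lq_comm (hq : q ≠ 0) (x : ℤ → ℤ → ℝ≥0∞) :
    (lq q fun n => lq q fun j => x n j) = lq q fun j => lq q fun n => x n j := by
  rcases eq_or_ne q ∞ with rfl | hq'
  · simp only [lq_top]
    exact iSup_comm
  · simp only [lq_eq_tsum hq hq', one_div, ENNReal.rpow_inv_rpow (toReal_pos hq hq').ne']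
    rw [ENNReal.tsum_comm]

/-- The two-sided geometric kernel `2 ^ (-s |n - j|)`, off whose diagonal all errors in the
discretized estimates decay. -/
def decay (s : ℝ) (n j : ℤ) : ℝ≥0∞ :=
  2 ^ (-(s * |(n - j : ℝ)|))

theorem decay_self (s : ℝ) (n : ℤ) : decay s n n = 1 := by
  simp [decay]

theorem decay_comm (s : ℝ) (n j : ℤ) : decay s n j = decay s j n := by
  rw [decay, decay, abs_sub_comm]

theorem decay_add (s t : ℝ) (n j : ℤ) : decay (s + t) n j = decay s n j * decay t n j := by
  rw [decay, add_mul, neg_add, ENNReal.rpow_add _ _ two_ne_zero ofNat_ne_top, decay, decay]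

theorem decay_le_decay {s : ℝ} (hs : 0 ≤ s) {n j n' j' : ℤ}
    (h : |(n' - j' : ℝ)| ≤ |(n - j : ℝ)|) : decay s n j ≤ decay s n' j' :=
  ENNReal.rpow_le_rpow_of_exponent_le one_le_two (by gcongr)

theorem decay_le_one {s : ℝ} (hs : 0 ≤ s) (n j : ℤ) : decay s n j ≤ 1 :=
  (decay_le_decay hs (by simp)).trans_eq (decay_self s n)

theorem decay_le_decay_of_le_right {s : ℝ} (hs : 0 ≤ s) {n k j : ℤ} (hnk : n ≤ k) (hkj : k ≤ j) :
    decay s n j ≤ decay s n k := by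
  refine decay_le_decay hs ?_
  rw [abs_sub_comm, abs_sub_comm (n : ℝ), abs_of_nonneg, abs_of_nonneg] <;> norm_cast <;> lia

theorem decay_le_decay_of_le_left {s : ℝ} (hs : 0 ≤ s) {n k j : ℤ} (hnk : n ≤ k) (hkj : k ≤ j) :
    decay s n j ≤ decay s k j := by
  refine decay_le_decay hs ?_
  rw [abs_sub_comm, abs_sub_comm (n : ℝ), abs_of_nonneg, abs_of_nonneg] <;> norm_cast <;> lia

theorem summable_two_rpow_neg_mul_abs {c : ℝ} (hc : 0 < c) :
    Summable fun j : ℤ => (2 : ℝ) ^ (-(c * |(j : ℝ)|)) := by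
  have h : Summable fun n : ℕ => (2 : ℝ) ^ (-(c * n)) := by
    have := summable_geometric_of_lt_one (r := (2 : ℝ) ^ (-c)) (by positivity)
      (Real.rpow_lt_one_of_one_lt_of_neg one_lt_two (neg_lt_zero.2 hc))
    exact this.congr fun n => by rw [← Real.rpow_mul_natCast two_pos.le, neg_mul]
  exact .of_nat_of_neg (by simpa using h) (by simpa using h)

theorem lq_decay_dominated (hq : q ≠ 0) {s : ℝ} (hs : 0 < s) :
    (fun n => lq q (decay s n)) ≲ fun _ => 1 := by
  have hfin : lq q (decay s 0) ≠ ∞ := by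
    rcases eq_or_ne q ∞ with rfl | hq'
    · rw [lq_top]
      refine ((iSup_le fun j => ?_).trans_lt one_lt_top).ne
      exact decay_le_one hs.le 0 j
    · have hpos : 0 < q.toReal := toReal_pos hq hq'
      rw [lq_eq_tsum hq hq']
      refine (rpow_lt_top_of_nonneg (by positivity) ?_).ne
      convert (summable_two_rpow_neg_mul_abs (mul_pos hs hpos)).tsum_ofReal_ne_top using 4 with j
      rw [decay, ← ENNReal.rpow_mul, ← ENNReal.ofReal_rpow_of_pos two_pos]
      simp [mul_right_comm]
  refine ⟨(lq q (decay s 0)).toNNReal, fun n => ?_⟩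
  rw [coe_toNNReal hfin, mul_one, ← lq_comp_sub (decay s 0) n]
  exact lq_mono fun j => by simp [decay]

theorem iSup_decay_mul_le_lq (hq : q ≠ 0) (s : ℝ) (x : ℤ → ℝ≥0∞) (n : ℤ) :
    ⨆ j, decay s n j * x j ≤ lq q fun j => decay s n j * x j :=
  iSup_le fun j => le_lq hq (fun j => decay s n j * x j) j

theorem lq_decay_add_mul_dominated (hq : q ≠ 0) {s : ℝ} (hs : 0 < s) (t : ℝ) (n : ι → ℤ)
    (F : ι → ℤ → ℝ≥0∞) :
    (fun i => lq q fun j => decay (s + t) (n i) j * F i j) ≲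
      fun i => ⨆ j, decay t (n i) j * F i j := by
  refine Dominated.trans (.of_le fun i => ?_)
    ((((lq_decay_dominated hq hs).comp n).mul_left _).trans (.of_le fun i => (mul_one _).le))
  rw [← lq_const_mul hq]
  refine lq_mono fun j => ?_
  rw [decay_add, mul_assoc, mul_comm]
  gcongr
  exact le_iSup (fun j => decay t (n i) j * F i j) j

theorem lq_iSup_decay_mul_dominated (hq : q ≠ 0) {s : ℝ} (hs : 0 < s) (F : ι → ℤ → ℝ≥0∞) :
    (fun i => lq q fun n => ⨆ j, decay s n j * F i j) ≲ fun i => lq q (F i) := by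
  refine Dominated.trans (.of_le fun i => ?_) (Dominated.lq (F := fun i j =>
    F i j * lq q (decay s j)) <|
      (((lq_decay_dominated hq hs).comp Prod.snd).mul_left _).trans
        (.of_le fun p => (mul_one _).le))
  calc (lq q fun n => ⨆ j, decay s n j * F i j)
      ≤ lq q fun n => lq q fun j => decay s n j * F i j :=
        lq_mono fun n => iSup_decay_mul_le_lq hq s (F i) n
    _ = lq q fun j => lq q fun n => decay s n j * F i j := lq_lq_comm hq _
    _ = lq q fun j => F i j * lq q (decay s j) := by
        congr 1 with j
        rw [← lq_const_mul hq]
        congr 1 with n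
        rw [decay_comm, mul_comm]

end SequenceSpace

/-! ### Potter bounds and slow variation -/

/-- The weight `w` is positive on `(0, ∞)` and changes by at most a constant multiple of `R ^ m`
between two points whose ratio lies in `[R⁻¹, R]`. -/
def PotterBound (m : ℝ) (w : ℝ → ℝ) : Prop :=
  (∀ t, 0 < t → 0 < w t) ∧ ∃ C, 0 < C ∧ ∀ s t R, 0 < s → 0 < t → 1 ≤ R → s ≤ R * t → t ≤ R * s →
    w s ≤ C * R ^ m * w t

/-- Slow variation in Potter's form: `w` satisfies Potter bounds of every positive order. This is
what `SlowlyVarying` amounts to once measurability is dropped. -/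
def IsSlow (w : ℝ → ℝ) : Prop :=
  ∀ ε, 0 < ε → PotterBound ε w

section Potter

variable {m k : ℝ} {v w ρ : ℝ → ℝ}

namespace PotterBound

theorem pos (hw : PotterBound m w) {t : ℝ} (ht : 0 < t) : 0 < w t := hw.1 t ht

theorem mono (hw : PotterBound m w) (h : m ≤ k) : PotterBound k w := by
  obtain ⟨hpos, C, hC, hwC⟩ := hw
  refine ⟨hpos, C, hC, fun s t R hs ht hR hst hts => (hwC s t R hs ht hR hst hts).trans ?_⟩
  have := hpos t ht
  gcongr

theorem congr (hw : PotterBound m w) (h : ∀ t, 0 < t → v t = w t) : PotterBound m v := by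
  obtain ⟨hpos, C, hC, hwC⟩ := hw
  refine ⟨fun t ht => h t ht ▸ hpos t ht, C, hC, fun s t R hs ht hR hst hts => ?_⟩
  rw [h s hs, h t ht]
  exact hwC s t R hs ht hR hst hts

theorem mul (hv : PotterBound m v) (hw : PotterBound k w) :
    PotterBound (m + k) fun t => v t * w t := by
  obtain ⟨hvpos, C, hC, hvC⟩ := hv
  obtain ⟨hwpos, D, hD, hwD⟩ := hw
  refine ⟨fun t ht => mul_pos (hvpos t ht) (hwpos t ht), C * D, by positivity,
    fun s t R hs ht hR hst hts => ?_⟩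
  have hwnn := (hwpos s hs).le
  have hvnn := (hvpos t ht).le
  calc v s * w s ≤ (C * R ^ m * v t) * (D * R ^ k * w t) := by
        gcongr
        exacts [hvC s t R hs ht hR hst hts, hwD s t R hs ht hR hst hts]
    _ = C * D * R ^ (m + k) * (v t * w t) := by
        rw [Real.rpow_add (by positivity)]
        ring

theorem inv (hw : PotterBound m w) : PotterBound m fun t => (w t)⁻¹ := by
  obtain ⟨hpos, C, hC, hwC⟩ := hw
  refine ⟨fun t ht => inv_pos.2 (hpos t ht), C, hC, fun s t R hs ht hR hst hts => ?_⟩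
  rw [← div_eq_mul_inv, le_div_iff₀ (hpos t ht), inv_mul_le_iff₀ (hpos s hs), mul_comm]
  exact hwC t s R ht hs hR hts hst

theorem rpow (hw : PotterBound m w) (s : ℝ) : PotterBound (|s| * m) fun t => w t ^ s := by
  wlog hs : 0 ≤ s generalizing s
  · have := (this (-s) (by linarith)).inv
    rw [abs_neg] at this
    exact this.congr fun t ht => by rw [Real.rpow_neg (hw.pos ht).le, inv_inv]
  obtain ⟨hpos, C, hC, hwC⟩ := hw
  refine ⟨fun t ht => Real.rpow_pos_of_pos (hpos t ht) s, C ^ s, Real.rpow_pos_of_pos hC s,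
    fun x t R hx ht hR hxt htx => ?_⟩
  have := (hpos t ht).le
  calc w x ^ s ≤ (C * R ^ m * w t) ^ s :=
        Real.rpow_le_rpow (hpos x hx).le (hwC x t R hx ht hR hxt htx) hs
    _ = C ^ s * R ^ (|s| * m) * w t ^ s := by
        rw [Real.mul_rpow (by positivity) this, Real.mul_rpow hC.le (by positivity),
          ← Real.rpow_mul (by positivity), abs_of_nonneg hs, mul_comm m s]

theorem comp (hw : PotterBound m w) (hρ : PotterBound k ρ) (hk : 0 ≤ k) :
    PotterBound (k * m) fun t => w (ρ t) := by
  obtain ⟨hwpos, C, hC, hwC⟩ := hw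
  obtain ⟨hρpos, D, hD, hρD⟩ := hρ
  refine ⟨fun t ht => hwpos _ (hρpos t ht), C * max D 1 ^ m, by positivity,
    fun s t R hs ht hR hst hts => ?_⟩
  have hρle : ∀ {x y}, 0 < x → 0 < y → x ≤ R * y → y ≤ R * x → ρ x ≤ max D 1 * R ^ k * ρ y :=
    fun hx hy hxy hyx => (hρD _ _ R hx hy hR hxy hyx).trans <| by
      have := (hρpos _ hy).le
      gcongr
      exact le_max_left ..
  have hone : 1 ≤ max D 1 * R ^ k :=
    one_le_mul_of_one_le_of_one_le (le_max_right ..) (Real.one_le_rpow hR hk)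
  calc w (ρ s) ≤ C * (max D 1 * R ^ k) ^ m * w (ρ t) :=
        hwC _ _ _ (hρpos s hs) (hρpos t ht) hone (hρle hs ht hst hts) (hρle ht hs hts hst)
    _ = C * max D 1 ^ m * R ^ (k * m) * w (ρ t) := by
        rw [Real.mul_rpow (by positivity) (by positivity), ← Real.rpow_mul (by positivity),
          ← mul_assoc C]

theorem id : PotterBound 1 fun t => t :=
  ⟨fun _ h => h, 1, one_pos, fun s t R _ _ _ hst _ => by simpa using hst⟩

end PotterBound

namespace IsSlow

theorem pos (hw : IsSlow w) {t : ℝ} (ht : 0 < t) : 0 < w t := (hw 1 one_pos).pos ht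

theorem mul (hv : IsSlow v) (hw : IsSlow w) : IsSlow fun t => v t * w t := fun ε hε => by
  simpa using (hv (ε / 2) (half_pos hε)).mul (hw (ε / 2) (half_pos hε))

theorem inv (hw : IsSlow w) : IsSlow fun t => (w t)⁻¹ := fun ε hε => (hw ε hε).inv

theorem div (hv : IsSlow v) (hw : IsSlow w) : IsSlow fun t => v t / w t := by
  simpa only [div_eq_mul_inv] using hv.mul hw.inv

theorem comp (hw : IsSlow w) (hρ : PotterBound k ρ) (hk : 0 ≤ k) : IsSlow fun t => w (ρ t) :=
  fun ε hε => ((hw (ε / (k + 1)) (by positivity)).comp hρ hk).mono <| by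
    rw [← mul_div_assoc, div_le_iff₀ (by positivity)]
    linarith

theorem rpow (hw : IsSlow w) (s : ℝ) : IsSlow fun t => w t ^ s :=
  fun ε hε => ((hw (ε / (|s| + 1)) (by positivity)).rpow s).mono <| by
    rw [← mul_div_assoc, div_le_iff₀ (by positivity)]
    linarith

theorem potterBound_rpow_mul (hw : IsSlow w) (s : ℝ) :
    PotterBound (|s| + 1) fun t => t ^ s * w t := by
  simpa using (PotterBound.id.rpow s).mul (hw 1 one_pos)

end IsSlow

theorem EquivOn.exists_quasi_monotone {s : Set ℝ} {f g : ℝ → ℝ} {r : ℝ → ℝ → Prop}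
    (h : EquivOn s f g) (hg : ∀ x ∈ s, ∀ y ∈ s, r x y → g x ≤ g y) :
    ∃ C, 0 < C ∧ ∀ x ∈ s, ∀ y ∈ s, r x y → f x ≤ C * f y := by
  obtain ⟨C, hC, hfg⟩ := h
  refine ⟨C * C, by positivity, fun x hx y hy hxy => ?_⟩
  calc f x ≤ C * g x := (hfg x hx).2
    _ ≤ C * (C * f y) := by
        gcongr
        exact (hg x hx y hy hxy).trans ((inv_mul_le_iff₀ hC).1 (hfg y hy).1)
    _ = C * C * f y := (mul_assoc ..).symm

theorem SlowlyVarying.isSlow (hw : SlowlyVarying w) : IsSlow w := by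
  intro ε hε
  obtain ⟨-, hpos, hw⟩ := hw
  obtain ⟨⟨g, hg, hwg⟩, h, hh, hwh⟩ := hw ε hε
  obtain ⟨C, hC, hwC⟩ := hwg.exists_quasi_monotone fun x hx y hy => hg hx hy
  obtain ⟨D, -, hwD⟩ := hwh.exists_quasi_monotone fun x hx y hy => hh hy hx
  refine ⟨hpos, C ⊔ D, lt_sup_of_lt_left hC, fun s t R hs ht hR hst hts => ?_⟩
  have hwt := (hpos t ht).le
  rcases le_total s t with h | h
  · refine le_of_mul_le_mul_left ?_ (Real.rpow_pos_of_pos hs ε)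
    calc s ^ ε * w s ≤ C * (t ^ ε * w t) := hwC s hs t ht h
      _ ≤ (C ⊔ D) * ((R * s) ^ ε * w t) := by gcongr; exact le_sup_left
      _ = s ^ ε * ((C ⊔ D) * R ^ ε * w t) := by
          rw [Real.mul_rpow (by positivity) hs.le]
          ring
  · refine le_of_mul_le_mul_left ?_ (Real.rpow_pos_of_pos hs (-ε))
    have hts' : t ^ (-ε) ≤ R ^ ε * s ^ (-ε) :=
      calc t ^ (-ε) = R ^ ε * (R * t) ^ (-ε) := by
            rw [Real.mul_rpow (by positivity) ht.le, Real.rpow_neg (by positivity) (x := R),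
              mul_inv_cancel_left₀ (by positivity)]
        _ ≤ R ^ ε * s ^ (-ε) := by
            gcongr ?_ * ?_
            exact Real.rpow_le_rpow_of_nonpos hs hst (by linarith)
    calc s ^ (-ε) * w s ≤ D * (t ^ (-ε) * w t) := hwD s hs t ht h
      _ ≤ (C ⊔ D) * (R ^ ε * s ^ (-ε) * w t) := by gcongr; exact le_sup_right
      _ = s ^ (-ε) * ((C ⊔ D) * R ^ ε * w t) := by ring

end Potter

/-! ### The multiplicative Haar measure and dyadic sampling -/

/-- The measure `du / u` on `(0, ∞)`, realized as the image of Lebesgue measure under `exp`.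
The factor `u ^ (-1 / q)` in the interpolation norms turns Lebesgue `L_q` into `L_q` of this
measure. -/
def dlog : Measure ℝ :=
  Measure.map Real.exp volume

section Haar

variable {ι : Type*} {q : ℝ≥0∞}

theorem measurableEmbedding_exp : MeasurableEmbedding Real.exp :=
  Real.isOpenEmbedding_exp.measurableEmbedding

theorem ae_dlog_pos : ∀ᵐ u ∂dlog, 0 < u :=
  measurableEmbedding_exp.ae_map_iff.2 (ae_of_all _ Real.exp_pos)

theorem dlog_withDensity : dlog.withDensity ENNReal.ofReal = volume.restrict (Ioi 0) := by
  ext s hs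
  rw [withDensity_apply _ hs, dlog, measurableEmbedding_exp.restrict_map,
    measurableEmbedding_exp.lintegral_map, Measure.restrict_apply hs, inter_comm,
    ← Real.range_exp, ← image_preimage_eq_range_inter, ← setLIntegral_one,
    lintegral_image_eq_lintegral_abs_deriv_mul (Real.measurable_exp hs)
      (fun x _ => (Real.hasDerivAt_exp x).hasDerivWithinAt) Real.exp_injective.injOn]
  simp only [abs_of_pos (Real.exp_pos _), mul_one]

theorem map_mul_left_dlog {R : ℝ} (hR : 0 < R) : Measure.map (R * ·) dlog = dlog := by
  have hcomp : (R * ·) ∘ Real.exp = Real.exp ∘ (Real.log R + ·) := by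
    ext x
    simp [Real.exp_add, Real.exp_log hR]
  rw [dlog, Measure.map_map (measurable_const_mul R) Real.measurable_exp, hcomp,
    ← Measure.map_map Real.measurable_exp (measurable_const_add _), map_add_left_eq_self]

theorem eLpNorm_dlog_comp_mul_left {R : ℝ} (hR : 0 < R) (S : Set ℝ) (F : ℝ → ℝ≥0∞) :
    eLpNorm (fun u => F (R * u)) q (dlog.restrict ((R * ·) ⁻¹' S)) =
      eLpNorm F q (dlog.restrict S) := by
  have hemb : MeasurableEmbedding (R * ·) := measurableEmbedding_mulLeft₀ hR.ne'
  nth_rw 2 [← map_mul_left_dlog hR]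
  rw [hemb.restrict_map, hemb.eLpNorm_map_measure]
  rfl

theorem lqNorm_eq_eLpNorm_dlog (hq : q ≠ 0) {S : Set ℝ} (hS : MeasurableSet S)
    (hpos : S ⊆ Ioi 0) {g F : ℝ → ℝ≥0∞}
    (hg : ∀ u ∈ S, g u = ENNReal.ofReal (u ^ (-q⁻¹.toReal)) * F u) :
    LqNorm q S g = eLpNorm F q (dlog.restrict S) := by
  have hvol : volume.restrict S = (dlog.restrict S).withDensity ENNReal.ofReal := by
    rw [← restrict_withDensity hS, dlog_withDensity, Measure.restrict_restrict hS,
      inter_eq_left.2 hpos]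
  rw [LqNorm, hvol]
  split_ifs with hq'
  · have hgF : g =ᵐ[dlog.restrict S] F :=
      (ae_restrict_iff' hS).2 (ae_of_all _ fun u hu => by simp [hg u hu, hq'])
    have hac : dlog.restrict S ≪ (dlog.restrict S).withDensity ENNReal.ofReal :=
      withDensity_absolutelyContinuous' ENNReal.measurable_ofReal.aemeasurable <|
        (ae_restrict_iff' hS).2 (ae_of_all _ fun u hu => by simpa using hpos hu)
    rw [hq', eLpNorm_exponent_top, eLpNormEssSup_eq_essSup_enorm]
    simp only [enorm_eq_self]
    rw [← essSup_congr_ae hgF]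
    exact (essSup_mono_measure (withDensity_absolutelyContinuous ..)).antisymm
      (essSup_mono_measure hac)
  · have hqpos : 0 < q.toReal := toReal_pos hq hq'
    rw [eLpNorm_eq_lintegral_rpow_enorm_toReal hq hq', toReal_inv, one_div,
      lintegral_withDensity_eq_lintegral_mul_non_measurable _ ENNReal.measurable_ofReal
        (ae_of_all _ fun _ => ofReal_lt_top)]
    congr 1
    refine setLIntegral_congr_fun hS fun u hu => ?_
    have hu0 : 0 < u := hpos hu
    rw [Pi.mul_apply, hg u hu, ENNReal.mul_rpow_of_nonneg _ _ hqpos.le,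
      ENNReal.ofReal_rpow_of_pos (by positivity), ← Real.rpow_mul hu0.le, toReal_inv, neg_mul,
      inv_mul_cancel₀ hqpos.ne', Real.rpow_neg_one, ← mul_assoc, ← ofReal_mul hu0.le,
      mul_inv_cancel₀ hu0.ne', ofReal_one, one_mul, enorm_eq_self]

theorem measurable_int_log : Measurable (Int.log 2 : ℝ → ℤ) := by
  have h : (Int.log 2 : ℝ → ℤ) = fun u => if 0 ≤ u then ⌊Real.logb 2 u⌋ else 0 := by
    ext u
    split_ifs with hu
    · exact_mod_cast (Real.floor_logb_natCast hu).symm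
    · exact Int.log_of_right_le_zero _ (not_le.1 hu).le
  rw [h]
  exact .ite measurableSet_Ici (Real.measurable_log.div_const _).floor measurable_const

theorem map_int_log_dlog :
    Measure.map (Int.log 2) dlog = ENNReal.ofReal (Real.log 2) • (Measure.count : Measure ℤ) := by
  refine Measure.ext_of_singleton fun j => ?_
  have hlog : 0 < Real.log 2 := Real.log_pos (by norm_num)
  have hpre : Real.exp ⁻¹' (Int.log 2 ⁻¹' {j}) = Ico (j * Real.log 2) ((j + 1) * Real.log 2) := by
    ext x
    have hx : Int.log 2 (Real.exp x) = ⌊x / Real.log 2⌋ := by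
      rw [← Real.floor_logb_natCast (Real.exp_pos x).le]
      simp [Real.logb]
    rw [mem_preimage, mem_preimage, mem_singleton_iff, hx, Int.floor_eq_iff, le_div_iff₀ hlog,
      div_lt_iff₀ hlog, mem_Ico]
  rw [Measure.map_apply measurable_int_log (measurableSet_singleton j), dlog,
    measurableEmbedding_exp.map_apply, hpre, Real.volume_Ico, ← sub_mul]
  simp

theorem eLpNorm_comp_int_log_dlog (P : Set ℤ) (x : ℤ → ℝ≥0∞) :
    eLpNorm (fun u => x (Int.log 2 u)) q (dlog.restrict (Int.log 2 ⁻¹' P)) =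
      ENNReal.ofReal (Real.log 2) ^ (1 / q).toReal * lq q (P.indicator x) := by
  have hP : MeasurableSet P := .of_discrete
  calc eLpNorm (x ∘ Int.log 2) q (dlog.restrict (Int.log 2 ⁻¹' P))
      = eLpNorm x q (Measure.map (Int.log 2) (dlog.restrict (Int.log 2 ⁻¹' P))) :=
        (eLpNorm_map_measure Measurable.of_discrete.aestronglyMeasurable
          measurable_int_log.aemeasurable).symm
    _ = eLpNorm (P.indicator x) q (ENNReal.ofReal (Real.log 2) • Measure.count) := by
        rw [← Measure.restrict_map measurable_int_log hP, map_int_log_dlog,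
          eLpNorm_indicator_eq_eLpNorm_restrict hP]
    _ = _ := eLpNorm_smul_measure_of_ne_zero (by simp [Real.log_pos one_lt_two]) ..

instance : NullSingletonClass dlog where
  measure_singleton x := by
    rw [dlog, measurableEmbedding_exp.map_apply]
    exact (subsingleton_singleton.preimage Real.exp_injective).measure_zero _

theorem dlog_restrict_Ioi_zero : dlog.restrict (Ioi 0) = dlog :=
  Measure.restrict_eq_self_of_ae_mem ae_dlog_pos

theorem dlog_restrict_Ioi (n : ℤ) :
    dlog.restrict (Ioi (2 ^ n)) = dlog.restrict (Int.log 2 ⁻¹' Ici n) := by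
  rw [restrict_Ioi_eq_restrict_Ici]
  refine Measure.restrict_congr_set ?_
  filter_upwards [ae_dlog_pos] with u hu
  exact propext (mod_cast Int.zpow_le_iff_le_log Nat.one_lt_two hu)

theorem dlog_restrict_Ioo (n : ℤ) :
    dlog.restrict (Ioo 0 (2 ^ n)) = dlog.restrict (Int.log 2 ⁻¹' Iio n) := by
  refine Measure.restrict_congr_set ?_
  filter_upwards [ae_dlog_pos] with u hu
  refine propext ((and_iff_right hu).trans ?_)
  exact mod_cast Int.lt_zpow_iff_log_lt Nat.one_lt_two hu

end Haar

/-- A family of functions on `(0, ∞)` is doubling if, uniformly in the index, its values at points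
of bounded ratio are comparable, so that its `L_q(du / u)` norms are those of its dyadic samples. -/
def Doubling {ι : Type*} (Φ : ι → ℝ → ℝ≥0∞) : Prop :=
  ∀ R, 1 ≤ R → ∃ D : ℝ≥0, ∀ i s t, 0 < s → 0 < t → s ≤ R * t → t ≤ R * s → Φ i s ≤ D * Φ i t

section Sampling

variable {ι : Type*} {q : ℝ≥0∞} {Φ Ψ : ι → ℝ → ℝ≥0∞}

theorem Doubling.mul (hΦ : Doubling Φ) (hΨ : Doubling Ψ) :
    Doubling fun i t => Φ i t * Ψ i t := fun R hR => by
  obtain ⟨C, hC⟩ := hΦ R hR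
  obtain ⟨D, hD⟩ := hΨ R hR
  refine ⟨C * D, fun i s t hs ht hst hts => ?_⟩
  rw [ENNReal.coe_mul, mul_mul_mul_comm]
  exact mul_le_mul' (hC i s t hs ht hst hts) (hD i s t hs ht hst hts)

theorem PotterBound.doubling {m : ℝ} {w : ℝ → ℝ} (hw : PotterBound m w) :
    Doubling fun (_ : ι) t => ENNReal.ofReal (w t) := fun R hR => by
  obtain ⟨-, C, hC, hwC⟩ := hw
  refine ⟨(C * R ^ m).toNNReal, fun _ s t hs ht hst hts => ?_⟩
  rw [ENNReal.ofNNReal_toNNReal, ← ofReal_mul (by positivity)]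
  exact ofReal_le_ofReal (hwC s t R hs ht hR hst hts)

theorem Doubling.eLpNorm_Ioi (hΦ : Doubling Φ) :
    Doubling fun i t => eLpNorm (Φ i) q (dlog.restrict (Ioi t)) := fun R hR => by
  have hR0 : 0 < R := by positivity
  obtain ⟨D, hD⟩ := hΦ R hR
  refine ⟨D, fun i s t _ ht _ hts => ?_⟩
  have hpre : (R⁻¹ * ·) ⁻¹' Ioi s ⊆ Ioi t := fun u (hu : s < R⁻¹ * u) =>
    hts.trans_lt ((lt_inv_mul_iff₀ hR0).1 hu)
  calc eLpNorm (Φ i) q (dlog.restrict (Ioi s))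
      = eLpNorm (fun u => Φ i (R⁻¹ * u)) q (dlog.restrict ((R⁻¹ * ·) ⁻¹' Ioi s)) :=
        (eLpNorm_dlog_comp_mul_left (inv_pos.2 hR0) _ _).symm
    _ ≤ eLpNorm (fun u => Φ i (R⁻¹ * u)) q (dlog.restrict (Ioi t)) :=
        eLpNorm_mono_measure _ (Measure.restrict_mono hpre le_rfl)
    _ ≤ D * eLpNorm (Φ i) q (dlog.restrict (Ioi t)) := by
        refine eLpNorm_le_mul_eLpNorm_of_ae_le_mul' ((ae_restrict_iff' measurableSet_Ioi).2 <|
          ae_of_all _ fun u hu => ?_) q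
        have hu0 : 0 < u := ht.trans hu
        refine hD i _ u (by positivity) hu0 ?_ (by rw [mul_inv_cancel_left₀ hR0.ne'])
        exact mul_le_mul_of_nonneg_right ((inv_le_one_of_one_le₀ hR).trans hR) hu0.le

theorem Doubling.eLpNorm_restrict_comparable_lq (hΦ : Doubling Φ) :
    (fun p : ι × Set ℤ => eLpNorm (Φ p.1) q (dlog.restrict (Int.log 2 ⁻¹' p.2))) ≲≳
      fun p => lq q (p.2.indicator fun j => Φ p.1 (2 ^ j)) := by
  obtain ⟨D, hD⟩ := hΦ 2 one_le_two
  have hlog : ∀ {u : ℝ}, 0 < u → u ≤ 2 * 2 ^ Int.log 2 u ∧ 2 ^ Int.log 2 u ≤ u := fun {u} hu => by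
    rw [← zpow_one_add₀ two_ne_zero, add_comm]
    exact ⟨mod_cast (Int.lt_zpow_succ_log_self Nat.one_lt_two u).le,
      mod_cast Int.zpow_log_le_self Nat.one_lt_two hu⟩
  set c := (Real.log 2).toNNReal ^ (1 / q).toReal with hc
  have hcpos : c ≠ 0 := by
    simp [hc, Real.log_pos one_lt_two]
  have hstep : ∀ (i : ι) (P : Set ℤ),
      eLpNorm (fun u => Φ i (2 ^ Int.log 2 u)) q (dlog.restrict (Int.log 2 ⁻¹' P)) =
        c * lq q (P.indicator fun j => Φ i (2 ^ j)) := fun i P => by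
    rw [eLpNorm_comp_int_log_dlog P fun j => Φ i (2 ^ j), hc,
      ENNReal.coe_rpow_of_nonneg _ toReal_nonneg]
    rfl
  constructor
  · refine ⟨D * c, fun p => ?_⟩
    rw [ENNReal.coe_mul, mul_assoc, ← hstep]
    refine eLpNorm_le_mul_eLpNorm_of_ae_le_mul' (ae_restrict_of_ae ?_) q
    filter_upwards [ae_dlog_pos] with u hu
    have h := hlog hu
    exact hD _ _ _ hu (by positivity) h.1 (by linarith)
  · refine ⟨c⁻¹ * D, fun p => ?_⟩
    rw [ENNReal.coe_mul, ENNReal.coe_inv hcpos, mul_assoc, ← ENNReal.mul_le_iff_le_inv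
      (by simpa using hcpos) coe_ne_top, ← hstep]
    refine eLpNorm_le_mul_eLpNorm_of_ae_le_mul' (ae_restrict_of_ae ?_) q
    filter_upwards [ae_dlog_pos] with u hu
    have h := hlog hu
    exact hD _ _ _ (by positivity) hu (by linarith) h.1

theorem Doubling.eLpNorm_comparable_lq (hΦ : Doubling Φ) :
    (fun i => eLpNorm (Φ i) q dlog) ≲≳ fun i => lq q fun j => Φ i (2 ^ j) := by
  simpa using (hΦ.eLpNorm_restrict_comparable_lq (q := q)).comp fun i => (i, univ)

end Sampling

/-- The values of the weight `w` at the dyadic points `2 ^ n`: the weight sequence of a sampled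
norm. -/
def sample (w : ℝ → ℝ) (n : ℤ) : ℝ≥0∞ :=
  ENNReal.ofReal (w (2 ^ n))

section DyadicWeights

variable {s ε : ℝ} {v : ℝ → ℝ}

theorem sample_mul {u w : ℝ → ℝ} (hu : ∀ t, 0 < t → 0 < u t) (n : ℤ) :
    sample (fun t => u t * w t) n = sample u n * sample w n :=
  ofReal_mul (hu _ (by positivity)).le

theorem sample_congr {u w : ℝ → ℝ} (h : ∀ t, 0 < t → u t = w t) (n : ℤ) :
    sample u n = sample w n := by
  rw [sample, h _ (by positivity), sample]

theorem sample_pos {w : ℝ → ℝ} (hw : ∀ t, 0 < t → 0 < w t) (n : ℤ) : 0 < sample w n :=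
  ofReal_pos.2 (hw _ (by positivity))

theorem sample_ne_top (w : ℝ → ℝ) (n : ℤ) : sample w n ≠ ∞ := ofReal_ne_top

theorem decay_eq_ofReal (s : ℝ) (n j : ℤ) :
    decay s n j = ENNReal.ofReal (2 ^ (-(s * |(n - j : ℝ)|))) := by
  rw [decay, ← ENNReal.ofReal_rpow_of_pos two_pos, ofReal_ofNat]

theorem sample_rpow (s : ℝ) (n : ℤ) : sample (fun t => t ^ s) n = 2 ^ (s * n) := by
  rw [sample, ← Real.rpow_intCast, ← Real.rpow_mul two_pos.le, mul_comm,
    ← ENNReal.ofReal_rpow_of_pos two_pos, ofReal_ofNat]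

theorem IsSlow.decay_mul_sample_dominated (hv : IsSlow v) (hε : 0 < ε) :
    (fun p : ℤ × ℤ => decay ε p.1 p.2 * sample v p.1) ≲ fun p => sample v p.2 := by
  obtain ⟨-, C, hC, hvC⟩ := hv ε hε
  refine ⟨C.toNNReal, fun ⟨n, j⟩ => ?_⟩
  have hle : ∀ {n j : ℤ}, (2 : ℝ) ^ n ≤ 2 ^ |n - j| * 2 ^ j := fun {n j} => by
    rw [← zpow_add₀ two_ne_zero]
    exact zpow_le_zpow_right₀ one_le_two (by linarith [le_abs_self (n - j)])
  have hR : ((2 : ℝ) ^ |n - j|) ^ ε = 2 ^ (ε * |(n - j : ℝ)|) := by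
    rw [← Real.rpow_intCast, ← Real.rpow_mul two_pos.le, mul_comm]
    push_cast
    rfl
  dsimp only
  rw [decay_eq_ofReal, sample, sample, ofNNReal_toNNReal, ← ofReal_mul (by positivity),
    ← ofReal_mul hC.le, Real.rpow_neg two_pos.le]
  refine ofReal_le_ofReal ((inv_mul_le_iff₀ (by positivity)).2 ?_)
  rw [← hR, ← mul_assoc, mul_comm _ C]
  exact hvC _ _ _ (by positivity) (by positivity) (one_le_zpow₀ one_le_two (abs_nonneg _)) hle
    (abs_sub_comm n j ▸ hle)

theorem IsSlow.sample_rpow_mul_dominated (hv : IsSlow v) (h : ε < |s|) :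
    (fun p : {p : ℤ × ℤ // s * (p.1 - p.2) ≤ 0} => sample (fun t => t ^ s * v t) p.1.1) ≲
      fun p => decay ε p.1.1 p.1.2 * sample (fun t => t ^ s * v t) p.1.2 := by
  have hpow : ∀ n, sample (fun t => t ^ s * v t) n = 2 ^ (s * n) * sample v n := fun n => by
    rw [sample_mul fun t ht => by positivity, sample_rpow]
  have hexp : ∀ {n j : ℤ}, s * (n - j) ≤ 0 → (2 : ℝ≥0∞) ^ (s * n) =
      decay ε n j * 2 ^ (s * j) * decay (|s| - ε) n j := fun {n j} hnj => by
    rw [mul_right_comm, ← decay_add, add_sub_cancel, decay, ← abs_mul, abs_of_nonpos hnj,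
      ← ENNReal.rpow_add _ _ two_ne_zero ofNat_ne_top]
    ring_nf
  refine .trans (.of_le fun p => ?_) <| (((hv.decay_mul_sample_dominated (sub_pos.2 h)).comp
    Subtype.val).mul_left fun p => decay ε p.1.1 p.1.2 * 2 ^ (s * p.1.2)).trans
      (.of_le fun p => ?_)
  · rw [hpow, hexp p.2, mul_assoc]
  · rw [hpow, mul_assoc]

theorem IsSlow.sample_rpow_mul_dominated_of_le (hv : IsSlow v) (hs : 0 ≤ s) (h : ε < s) :
    (fun p : {p : ℤ × ℤ // p.1 ≤ p.2} => sample (fun t => t ^ s * v t) p.1.1) ≲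
      fun p => decay ε p.1.1 p.1.2 * sample (fun t => t ^ s * v t) p.1.2 := by
  obtain ⟨C, hC⟩ := hv.sample_rpow_mul_dominated (h.trans_le (le_abs_self s))
  exact ⟨C, fun ⟨p, hp⟩ => hC ⟨p, mul_nonpos_of_nonneg_of_nonpos hs (sub_nonpos.2 (mod_cast hp))⟩⟩

theorem IsSlow.sample_rpow_neg_mul_dominated_of_ge (hv : IsSlow v) (hs : 0 ≤ s) (h : ε < s) :
    (fun p : {p : ℤ × ℤ // p.2 ≤ p.1} => sample (fun t => t ^ (-s) * v t) p.1.1) ≲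
      fun p => decay ε p.1.1 p.1.2 * sample (fun t => t ^ (-s) * v t) p.1.2 := by
  obtain ⟨C, hC⟩ := hv.sample_rpow_mul_dominated (s := -s)
    (h.trans_le ((le_abs_self s).trans_eq (abs_neg s).symm))
  exact ⟨C, fun ⟨p, hp⟩ => hC ⟨p, mul_nonpos_of_nonpos_of_nonneg (neg_nonpos.2 hs)
    (sub_nonneg.2 (mod_cast hp))⟩⟩

/-- The kernel `min (1, 2 ^ (j - n))`: the bound `K(2 ^ j, f) ≤ N₀ f ⊓ 2 ^ j * N₁ f` is at most
this multiple of `N₀ f + 2 ^ n * N₁ f`. -/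
def minKernel (n j : ℤ) : ℝ≥0∞ :=
  min 1 (ENNReal.ofReal (2 ^ (j - n)))

theorem minKernel_of_le {n j : ℤ} (h : n ≤ j) : minKernel n j = 1 :=
  min_eq_left (one_le_ofReal.2 (one_le_zpow₀ one_le_two (sub_nonneg.2 h)))

theorem minKernel_of_ge {n j : ℤ} (h : j ≤ n) : minKernel n j = ENNReal.ofReal (2 ^ (j - n)) :=
  min_eq_right (ofReal_le_one.2 (zpow_le_one_of_nonpos₀ one_le_two (sub_nonpos.2 h)))

/-- A weight sequence is `ε`-interior if averaging it against `minKernel` costs nothing, with a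
margin of `ε` in the exponent. This is what `0 < θ < 1` provides for `w n = 2 ^ (-θ * n)`. -/
def Interior (ε : ℝ) (w : ℤ → ℝ≥0∞) : Prop :=
  (fun p : ℤ × ℤ => minKernel p.1 p.2 * w p.2) ≲ fun p => decay ε p.1 p.2 * w p.1

theorem IsSlow.interior (hv : IsSlow v) {θ : ℝ} (hε : 0 < ε) (h₀ : ε < θ) (h₁ : ε < 1 - θ) :
    Interior ε (sample fun t => t ^ (-θ) * v t) := by
  refine .of_cases (p := fun p => p.1 ≤ p.2) ?_ ?_
  · obtain ⟨C, hC⟩ := hv.sample_rpow_neg_mul_dominated_of_ge (hε.trans h₀).le h₀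
    refine ⟨C, fun ⟨⟨n, j⟩, (hnj : n ≤ j)⟩ => ?_⟩
    dsimp only
    rw [minKernel_of_le hnj, one_mul, decay_comm]
    exact hC ⟨(j, n), hnj⟩
  · obtain ⟨C, hC⟩ := hv.sample_rpow_mul_dominated_of_le (hε.trans h₁).le h₁
    refine ⟨C, fun ⟨⟨n, j⟩, (hnj : ¬n ≤ j)⟩ => ?_⟩
    have hshift : ∀ i, sample (fun t => t ^ (-θ) * v t) i * ENNReal.ofReal (2 ^ (i - n)) =
        ENNReal.ofReal (2 ^ (-n)) * sample (fun t => t ^ (1 - θ) * v t) i := fun i => by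
      rw [sample, sample, ← ofReal_mul' (by positivity), ← ofReal_mul (by positivity),
        sub_eq_add_neg 1 θ, Real.rpow_add (by positivity), Real.rpow_one, sub_eq_add_neg i,
        zpow_add₀ two_ne_zero]
      ring_nf
    have hn := hshift n
    rw [sub_self, zpow_zero, ofReal_one, mul_one] at hn
    calc minKernel n j * sample (fun t => t ^ (-θ) * v t) j
        = ENNReal.ofReal (2 ^ (-n)) * sample (fun t => t ^ (1 - θ) * v t) j := by
          rw [minKernel_of_ge (not_le.1 hnj).le, mul_comm, hshift]
      _ ≤ ENNReal.ofReal (2 ^ (-n)) *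
            (C * (decay ε j n * sample (fun t => t ^ (1 - θ) * v t) n)) :=
          mul_le_mul_right (hC ⟨(j, n), (not_le.1 hnj).le⟩) _
      _ = C * (decay ε n j * sample (fun t => t ^ (-θ) * v t) n) := by
          rw [hn, decay_comm]
          ring

end DyadicWeights

/-! ### The K-functional and the discretized norms -/

/-- A quasi-norm on an additive group, allowed to be infinite: the setting of the K-functional
estimates, free of scalars. -/
structure IsQuasiNorm {G : Type*} [AddCommGroup G] (N : G → ℝ≥0∞) : Prop where
  zero : N 0 = 0
  neg : ∀ f, N (-f) = N f
  add_dominated : (fun p : G × G => N (p.1 + p.2)) ≲ fun p => N p.1 + N p.2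

theorem QuasiBanach.isQuasiNorm (A : QuasiBanach E) : IsQuasiNorm A.N where
  zero := A.zero
  neg f := by simpa using A.smul (-1) f
  add_dominated := by
    obtain ⟨C, -, hC, hA⟩ := A.quasi
    exact ⟨C.toNNReal, fun p => by simpa only [coe_toNNReal hC] using hA p.1 p.2⟩

section KFunctional

variable {G : Type*} [AddCommGroup G] {N₀ N₁ : G → ℝ≥0∞}

theorem Kf_le (t : ℝ) (f g : G) : Kf N₀ N₁ t f ≤ N₀ g + ENNReal.ofReal t * N₁ (f - g) :=
  iInf_le _ g

theorem Kf_le_left (hN₁ : IsQuasiNorm N₁) (t : ℝ) (f : G) : Kf N₀ N₁ t f ≤ N₀ f := by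
  simpa [hN₁.zero] using Kf_le (N₀ := N₀) (N₁ := N₁) t f f

theorem Kf_le_right (hN₀ : IsQuasiNorm N₀) (t : ℝ) (f : G) :
    Kf N₀ N₁ t f ≤ ENNReal.ofReal t * N₁ f := by
  simpa [hN₀.zero] using Kf_le (N₀ := N₀) (N₁ := N₁) t f 0

theorem Kf_neg (hN₀ : IsQuasiNorm N₀) (hN₁ : IsQuasiNorm N₁) (t : ℝ) (f : G) :
    Kf N₀ N₁ t (-f) = Kf N₀ N₁ t f := by
  refine (Equiv.neg G).iInf_congr fun g => ?_
  rw [Equiv.neg_apply, hN₀.neg, ← hN₁.neg (f - -g), neg_sub', neg_neg]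

theorem Kf_add_dominated (hN₀ : IsQuasiNorm N₀) (hN₁ : IsQuasiNorm N₁) :
    (fun p : ℝ × G × G => Kf N₀ N₁ p.1 (p.2.1 + p.2.2)) ≲
      fun p => Kf N₀ N₁ p.1 p.2.1 + Kf N₀ N₁ p.1 p.2.2 := by
  obtain ⟨C, hC⟩ := hN₀.add_dominated
  obtain ⟨D, hD⟩ := hN₁.add_dominated
  have hinf : (fun p : ℝ × G × G => Kf N₀ N₁ p.1 p.2.1 + Kf N₀ N₁ p.1 p.2.2) = fun p =>
      ⨅ h : G × G, (N₀ h.1 + ENNReal.ofReal p.1 * N₁ (p.2.1 - h.1)) +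
        (N₀ h.2 + ENNReal.ofReal p.1 * N₁ (p.2.2 - h.2)) := by
    ext p
    simp only [Kf, ENNReal.iInf_add, ENNReal.add_iInf, iInf_prod]
    exact iInf_comm
  rw [hinf]
  refine .iInf_right ⟨C ⊔ D, fun ⟨⟨t, f, g⟩, h, k⟩ => ?_⟩
  calc Kf N₀ N₁ t (f + g)
      ≤ N₀ (h + k) + ENNReal.ofReal t * N₁ ((f - h) + (g - k)) := by
        rw [← add_sub_add_comm]
        exact Kf_le t (f + g) (h + k)
    _ ≤ C * (N₀ h + N₀ k) + ENNReal.ofReal t * (D * (N₁ (f - h) + N₁ (g - k))) := by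
        gcongr
        exacts [hC (h, k), hD (f - h, g - k)]
    _ ≤ (C ⊔ D : ℝ≥0) * (N₀ h + N₀ k) +
          ENNReal.ofReal t * ((C ⊔ D : ℝ≥0) * (N₁ (f - h) + N₁ (g - k))) := by
        gcongr
        exacts [le_sup_left, le_sup_right]
    _ = (C ⊔ D : ℝ≥0) * (N₀ h + ENNReal.ofReal t * N₁ (f - h) +
          (N₀ k + ENNReal.ofReal t * N₁ (g - k))) := by ring

theorem Kf_sub_dominated (hN₀ : IsQuasiNorm N₀) (hN₁ : IsQuasiNorm N₁) :
    (fun p : ℝ × G × G => Kf N₀ N₁ p.1 (p.2.1 - p.2.2)) ≲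
      fun p => Kf N₀ N₁ p.1 p.2.1 + Kf N₀ N₁ p.1 p.2.2 := by
  simpa only [sub_eq_add_neg, Kf_neg hN₀ hN₁] using
    (Kf_add_dominated hN₀ hN₁).comp fun p : ℝ × G × G => (p.1, p.2.1, -p.2.2)

theorem doubling_Kf : Doubling fun (f : G) t => Kf N₀ N₁ t f := fun R hR => by
  refine ⟨R.toNNReal, fun f s t _ _ hst _ => ?_⟩
  have hR1 : 1 ≤ ENNReal.ofReal R := one_le_ofReal.2 hR
  dsimp only [Kf]
  rw [ofNNReal_toNNReal, ENNReal.mul_iInf_of_ne (one_pos.trans_le hR1).ne' ofReal_ne_top]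
  refine iInf_mono fun g => ?_
  rw [mul_add, ← mul_assoc, ← ofReal_mul (by positivity)]
  exact add_le_add (le_mul_of_one_le_left' hR1) (by gcongr)

variable {q r : ℝ≥0∞} {θ σ : ℝ} {a b : ℝ → ℝ}

theorem ofReal_rpow_sub_mul (s : ℝ) (w : ℝ → ℝ) (x : ℝ≥0∞) {u : ℝ} (hu : 0 < u) (e : ℝ) :
    ENNReal.ofReal (u ^ (s - e) * w u) * x =
      ENNReal.ofReal (u ^ (-e)) * (ENNReal.ofReal (u ^ s * w u) * x) := by
  rw [← mul_assoc, ← ofReal_mul (by positivity), sub_eq_neg_add, Real.rpow_add hu, mul_assoc]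

theorem doubling_rpow_mul_mul_Kf (hb : IsSlow b) (θ : ℝ) :
    Doubling fun (f : G) u => ENNReal.ofReal (u ^ (-θ) * b u) * Kf N₀ N₁ u f :=
  (hb.potterBound_rpow_mul (-θ)).doubling.mul doubling_Kf

theorem normK_eq_eLpNorm_dlog (hq : q ≠ 0) :
    normK N₀ N₁ θ q b = fun f =>
      eLpNorm (fun u => ENNReal.ofReal (u ^ (-θ) * b u) * Kf N₀ N₁ u f) q dlog := by
  ext f
  rw [normK, lqNorm_eq_eLpNorm_dlog hq measurableSet_Ioi subset_rfl fun u hu =>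
    ofReal_rpow_sub_mul _ _ _ hu _, dlog_restrict_Ioi_zero]

theorem normK_comparable (hq : q ≠ 0) (hb : IsSlow b) :
    normK N₀ N₁ θ q b ≲≳ fun f =>
      lq q fun j => sample (fun u => u ^ (-θ) * b u) j * Kf N₀ N₁ (2 ^ j) f := by
  rw [normK_eq_eLpNorm_dlog hq]
  exact (doubling_rpow_mul_mul_Kf hb θ).eLpNorm_comparable_lq

theorem normR_eq_eLpNorm_dlog (hr : r ≠ 0) (hq : q ≠ 0) :
    normR N₀ N₁ σ r q b a = fun f => eLpNorm (fun t => ENNReal.ofReal (b t / a t) *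
      eLpNorm (fun u => ENNReal.ofReal (u ^ (-σ) * a u) * Kf N₀ N₁ u f) q (dlog.restrict (Ioi t)))
        r dlog := by
  ext f
  rw [normR, lqNorm_eq_eLpNorm_dlog hr measurableSet_Ioi subset_rfl fun t ht => ?_,
    dlog_restrict_Ioi_zero]
  have ht0 : 0 < t := ht
  rw [lqNorm_eq_eLpNorm_dlog hq measurableSet_Ioi (Ioi_subset_Ioi ht0.le) fun u hu =>
    ofReal_rpow_sub_mul _ _ _ (ht0.trans hu) _, ofReal_mul (by positivity), mul_assoc]

theorem normR_comparable (hr : r ≠ 0) (hq : q ≠ 0) {m : ℝ}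
    (hba : PotterBound m fun t => b t / a t) (ha : IsSlow a) :
    normR N₀ N₁ σ r q b a ≲≳ fun f => lq r fun k => sample (fun t => b t / a t) k * lq q
      ((Ici k).indicator fun j => sample (fun u => u ^ (-σ) * a u) j * Kf N₀ N₁ (2 ^ j) f) := by
  have hinner := doubling_rpow_mul_mul_Kf (N₀ := N₀) (N₁ := N₁) ha σ
  have hIci : (fun p : G × ℤ => eLpNorm (fun u => ENNReal.ofReal (u ^ (-σ) * a u) *
      Kf N₀ N₁ u p.1) q (dlog.restrict (Ioi (2 ^ p.2)))) ≲≳ fun p => lq q ((Ici p.2).indicator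
        fun j => sample (fun u => u ^ (-σ) * a u) j * Kf N₀ N₁ (2 ^ j) p.1) := by
    simp only [dlog_restrict_Ioi]
    exact hinner.eLpNorm_restrict_comparable_lq.comp fun p : G × ℤ => (p.1, Ici p.2)
  rw [normR_eq_eLpNorm_dlog hr hq]
  exact (hba.doubling.mul hinner.eLpNorm_Ioi).eLpNorm_comparable_lq.trans
    (.lq (hIci.mul_left fun p : G × ℤ => sample (fun t => b t / a t) p.2))

end KFunctional

/-- The function `t ↦ ‖s ^ (-1 / q) d(s)‖_{q, (0, t)}`; for `d = b₀ / a₀` it is the factor relating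
`c₀` to `a₀`. -/
def headNorm (q : ℝ≥0∞) (d : ℝ → ℝ) (t : ℝ) : ℝ≥0∞ :=
  LqNorm q (Ioo 0 t) (svWgt q d)

section HeadNorm

variable {q : ℝ≥0∞} {d : ℝ → ℝ}

theorem headNorm_eq_eLpNorm_dlog (hq : q ≠ 0) (d : ℝ → ℝ) (t : ℝ) :
    headNorm q d t = eLpNorm (fun u => ENNReal.ofReal (d u)) q (dlog.restrict (Ioo 0 t)) :=
  lqNorm_eq_eLpNorm_dlog hq measurableSet_Ioo (fun _ hu => hu.1) fun _ hu =>
    ofReal_mul (Real.rpow_pos_of_pos hu.1 _).le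

theorem headNorm_comparable (hq : q ≠ 0) (hd : IsSlow d) :
    (fun n : ℤ => headNorm q d (2 ^ n)) ≲≳ fun n => lq q ((Iio n).indicator (sample d)) := by
  simp only [headNorm_eq_eLpNorm_dlog hq, dlog_restrict_Ioo]
  exact (hd 1 one_pos).doubling.eLpNorm_restrict_comparable_lq.comp fun n => ((), Iio n)

theorem headNorm_le_mul (hq : q ≠ 0) (hd : IsSlow d) {ε : ℝ} (hε : 0 < ε) :
    ∃ C, 0 < C ∧ ∀ s t R, 1 ≤ R → s ≤ R * t →
      headNorm q d s ≤ ENNReal.ofReal (C * R ^ ε) * headNorm q d t := by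
  obtain ⟨-, C, hC, hdC⟩ := hd ε hε
  refine ⟨C, hC, fun s t R hR hst => ?_⟩
  have hR0 : 0 < R := by positivity
  have hpre : (R * ·) ⁻¹' Ioo 0 s ⊆ Ioo 0 t := fun u hu =>
    ⟨pos_of_mul_pos_right hu.1 hR0.le, lt_of_mul_lt_mul_left (hu.2.trans_le hst) hR0.le⟩
  rw [headNorm_eq_eLpNorm_dlog hq, headNorm_eq_eLpNorm_dlog hq]
  calc eLpNorm (fun u => ENNReal.ofReal (d u)) q (dlog.restrict (Ioo 0 s))
      = eLpNorm (fun u => ENNReal.ofReal (d (R * u))) q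
          (dlog.restrict ((R * ·) ⁻¹' Ioo 0 s)) :=
        (eLpNorm_dlog_comp_mul_left hR0 _ fun u => ENNReal.ofReal (d u)).symm
    _ ≤ eLpNorm (fun u => ENNReal.ofReal (d (R * u))) q (dlog.restrict (Ioo 0 t)) :=
        eLpNorm_mono_measure _ (Measure.restrict_mono hpre le_rfl)
    _ ≤ ENNReal.ofReal (C * R ^ ε) *
          eLpNorm (fun u => ENNReal.ofReal (d u)) q (dlog.restrict (Ioo 0 t)) := by
        refine eLpNorm_le_mul_eLpNorm_of_ae_le_mul' ((ae_restrict_iff' measurableSet_Ioo).2 <|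
          ae_of_all _ fun u hu => ?_) q
        rw [enorm_eq_self, enorm_eq_self, ofNNReal_toNNReal, ← ofReal_mul (by positivity)]
        have hRu : u ≤ R * u := le_mul_of_one_le_left hu.1.le hR
        exact ofReal_le_ofReal (hdC _ u R (mul_pos hR0 hu.1) hu.1 hR le_rfl <|
          hRu.trans (le_mul_of_one_le_left (hu.1.le.trans hRu) hR))

theorem sample_dominated_headNorm (hq : q ≠ 0) (hd : IsSlow d) :
    sample d ≲ fun n => headNorm q d (2 ^ n) := by
  obtain ⟨C, -, hC⟩ := headNorm_le_mul hq hd one_pos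
  have hle : ∀ n, sample d n ≤ lq q ((Iio (n + 1)).indicator (sample d)) := fun n => by
    have h := le_lq hq ((Iio (n + 1)).indicator (sample d)) n
    rwa [indicator_of_mem (mem_Iio.2 (lt_add_one n))] at h
  refine (Dominated.of_le hle).trans (((headNorm_comparable hq hd).2.comp (· + 1)).trans
    ⟨(C * 2 ^ (1 : ℝ)).toNNReal, fun n => hC _ _ 2 one_le_two ?_⟩)
  rw [zpow_add_one₀ two_ne_zero, mul_comm]

theorem headNorm_ne_top (hq : q ≠ 0) (hd : IsSlow d) (hfin : headNorm q d 1 ≠ ∞) (t : ℝ) :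
    headNorm q d t ≠ ∞ := by
  obtain ⟨C, -, hC⟩ := headNorm_le_mul hq hd one_pos
  refine ne_top_of_le_ne_top (mul_ne_top ofReal_ne_top hfin) (hC t 1 (max t 1) (le_max_right ..) ?_)
  rw [mul_one]
  exact le_max_left ..

theorem headNorm_pos (hq : q ≠ 0) (hd : IsSlow d) {t : ℝ} (ht : 0 < t) : 0 < headNorm q d t := by
  obtain ⟨C, -, hC⟩ := headNorm_le_mul hq hd one_pos
  obtain ⟨D, hD⟩ := sample_dominated_headNorm hq hd
  have hR : 1 ≤ max 1 t⁻¹ * t := by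
    simpa [ht.ne'] using mul_le_mul_of_nonneg_right (le_max_right 1 t⁻¹) ht.le
  refine pos_iff_ne_zero.2 fun h => (sample_pos (fun _ => hd.pos) 0).not_ge ?_
  calc sample d 0 ≤ D * headNorm q d 1 := by simpa using hD 0
    _ ≤ D * (_ * headNorm q d t) := by gcongr; exact hC 1 t _ (le_max_left ..) hR
    _ = 0 := by rw [h, mul_zero, mul_zero]

theorem IsSlow.headNorm (hd : IsSlow d) (hq : q ≠ 0) (hfin : headNorm q d 1 ≠ ∞) :
    IsSlow fun t => (headNorm q d t).toReal := fun ε hε => by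
  have htop := headNorm_ne_top hq hd hfin
  obtain ⟨C, hC, hdC⟩ := headNorm_le_mul hq hd hε
  refine ⟨fun t ht => toReal_pos (headNorm_pos hq hd ht).ne' (htop t), C, hC,
    fun s t R _ _ hR hst _ => ?_⟩
  have h := toReal_mono (mul_ne_top ofReal_ne_top (htop t)) (hdC s t R hR hst)
  rwa [toReal_mul, toReal_ofReal (by positivity)] at h

end HeadNorm

/-! ### Holmstedt's formula for an abstract couple -/

section Holmstedt

variable {G : Type*} [AddCommGroup G] {N₀ N₁ X₀ X₁ : G → ℝ≥0∞} {q : ℝ≥0∞} {ε : ℝ}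
  {w ω : ℤ → ℝ≥0∞} {ρ : ℝ → ℝ}

theorem Interior.iSup_dominated (hw : Interior ε w) :
    (fun n => ⨆ j, decay (-ε) n j * (minKernel n j * w j)) ≲ w := by
  have h : (fun n => ⨆ j, decay (-ε) n j * (minKernel n j * w j)) ≲
      fun n => ⨆ j, decay (-ε) n j * (decay ε n j * w n) :=
    .iSup (Dominated.mul_left (fun p : ℤ × ℤ => decay (-ε) p.1 p.2) hw)
  refine h.trans (.of_le fun n => iSup_le fun j => ?_)
  rw [← mul_assoc, ← decay_add, neg_add_cancel]
  simp [decay]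

theorem Interior.lq_dominated (hq : q ≠ 0) (hε : 0 < ε) (hw : Interior ε w) :
    (fun n => lq q fun j => minKernel n j * w j) ≲ w := by
  have h : (fun n => lq q fun j => minKernel n j * w j) ≲
      fun n => lq q fun j => decay ε n j * w n := .lq hw
  refine h.trans (.trans (.of_le fun n => ?_) <|
    ((lq_decay_dominated hq hε).mul_left w).trans (.of_le fun n => (mul_one _).le))
  rw [← lq_const_mul hq]
  exact lq_mono fun j => (mul_comm _ _).le

theorem Kf_dominated_indicator_Iic_add (hN₀ : IsQuasiNorm N₀) (hN₁ : IsQuasiNorm N₁) :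
    (fun p : ((G × ℤ) × G) × ℤ => Kf N₀ N₁ (2 ^ p.2) p.1.2) ≲ fun p =>
      (Iic p.1.1.2).indicator (fun j => Kf N₀ N₁ (2 ^ j) p.1.1.1) p.2 + minKernel p.1.1.2 p.2 *
        (N₀ p.1.2 + ENNReal.ofReal (2 ^ p.1.1.2) * N₁ (p.1.1.1 - p.1.2)) := by
  refine .of_cases (p := fun p => p.2 ≤ p.1.1.2) ?_ (.of_le ?_)
  · obtain ⟨C, hC⟩ := Kf_sub_dominated hN₀ hN₁
    refine ⟨C, fun ⟨⟨⟨⟨f, n⟩, g⟩, j⟩, (hj : j ≤ n)⟩ => ?_⟩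
    calc Kf N₀ N₁ (2 ^ j) g = Kf N₀ N₁ (2 ^ j) (f - (f - g)) := by rw [sub_sub_self]
      _ ≤ C * (Kf N₀ N₁ (2 ^ j) f + Kf N₀ N₁ (2 ^ j) (f - g)) := hC (2 ^ j, f, f - g)
      _ ≤ _ := ?_
    dsimp only
    rw [indicator_of_mem (mem_Iic.2 hj), minKernel_of_ge hj]
    gcongr
    refine (Kf_le_right hN₀ _ _).trans ?_
    rw [mul_add, ← mul_assoc, ← ofReal_mul (by positivity), ← zpow_add₀ two_ne_zero,
      sub_add_cancel]
    exact le_add_self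
  · intro ⟨⟨⟨⟨f, n⟩, g⟩, j⟩, (hj : ¬j ≤ n)⟩
    dsimp only
    rw [minKernel_of_le (not_le.1 hj).le, one_mul]
    exact (Kf_le_left hN₁ _ _).trans (le_self_add.trans le_add_self)

theorem Kf_sub_dominated_indicator_Ici_add (hN₀ : IsQuasiNorm N₀) (hN₁ : IsQuasiNorm N₁) :
    (fun p : ((G × ℤ) × G) × ℤ => Kf N₀ N₁ (2 ^ p.2) (p.1.1.1 - p.1.2)) ≲ fun p =>
      (Ici p.1.1.2).indicator (fun j => Kf N₀ N₁ (2 ^ j) p.1.1.1) p.2 + minKernel p.1.1.2 p.2 *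
        (N₀ p.1.2 + ENNReal.ofReal (2 ^ p.1.1.2) * N₁ (p.1.1.1 - p.1.2)) := by
  refine .of_cases (p := fun p => p.1.1.2 ≤ p.2) ?_ (.of_le ?_)
  · obtain ⟨C, hC⟩ := Kf_sub_dominated hN₀ hN₁
    refine ⟨C, fun ⟨⟨⟨⟨f, n⟩, g⟩, j⟩, (hj : n ≤ j)⟩ => ?_⟩
    dsimp only
    rw [indicator_of_mem (mem_Ici.2 hj), minKernel_of_le hj, one_mul]
    calc Kf N₀ N₁ (2 ^ j) (f - g) ≤ C * (Kf N₀ N₁ (2 ^ j) f + Kf N₀ N₁ (2 ^ j) g) :=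
          hC (2 ^ j, f, g)
      _ ≤ _ := by
        gcongr
        exact (Kf_le_left hN₁ _ _).trans le_self_add
  · intro ⟨⟨⟨⟨f, n⟩, g⟩, j⟩, (hj : ¬n ≤ j)⟩
    dsimp only
    rw [minKernel_of_ge (not_le.1 hj).le]
    refine (Kf_le_right hN₀ _ _).trans ?_
    rw [mul_add, ← mul_assoc, ← ofReal_mul (by positivity), ← zpow_add₀ two_ne_zero,
      sub_add_cancel]
    exact le_add_self.trans le_add_self

theorem lq_Ici_mul_Kf_dominated_add (hN₀ : IsQuasiNorm N₀) (hN₁ : IsQuasiNorm N₁) :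
    (fun p : (G × ℤ) × G => lq q ((Ici p.1.2).indicator fun j => w j * Kf N₀ N₁ (2 ^ j) p.1.1)) ≲
      fun p => lq q ((Ici p.1.2).indicator fun j => w j * Kf N₀ N₁ (2 ^ j) p.2) +
        lq q fun j => w j * Kf N₀ N₁ (2 ^ j) (p.1.1 - p.2) := by
  obtain ⟨C, hC⟩ := Kf_add_dominated hN₀ hN₁
  have hK : (fun p : ((G × ℤ) × G) × ℤ =>
      (Ici p.1.1.2).indicator (fun j => w j * Kf N₀ N₁ (2 ^ j) p.1.1.1) p.2) ≲ fun p =>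
        (Ici p.1.1.2).indicator (fun j => w j * Kf N₀ N₁ (2 ^ j) p.1.2) p.2 +
          w p.2 * Kf N₀ N₁ (2 ^ p.2) (p.1.1.1 - p.1.2) := by
    refine ⟨C, fun ⟨⟨⟨f, n⟩, g⟩, j⟩ => indicator_apply_le' (fun hj => ?_) fun _ => zero_le⟩
    dsimp only
    rw [indicator_of_mem hj, ← mul_add, mul_left_comm]
    gcongr
    simpa using hC (2 ^ j, g, f - g)
  exact (Dominated.lq hK).trans (lq_add_dominated _ _)

theorem mul_lq_Ici_dominated (hq : q ≠ 0) (hε : 0 < ε) (hω : ∀ n, sample ρ n * w n = ω n)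
    (hρ : (fun p : {p : ℤ × ℤ // p.1 ≤ p.2} => sample ρ p.1.1) ≲
      fun p => decay ε p.1.1 p.1.2 * sample ρ p.1.2)
    (hX₀ : (fun p : G × ℤ => ω p.2 * Kf N₀ N₁ (2 ^ p.2) p.1) ≲ fun p => X₀ p.1) :
    (fun p : G × ℤ =>
      sample ρ p.2 * lq q ((Ici p.2).indicator fun j => w j * Kf N₀ N₁ (2 ^ j) p.1)) ≲
        fun p => X₀ p.1 := by
  obtain ⟨C, hC⟩ := hρ
  have hweight : (fun p : (G × ℤ) × ℤ => (Ici p.1.2).indicator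
      (fun j => sample ρ p.1.2 * (w j * Kf N₀ N₁ (2 ^ j) p.1.1)) p.2) ≲
        fun p => decay ε p.1.2 p.2 * (ω p.2 * Kf N₀ N₁ (2 ^ p.2) p.1.1) := by
    refine ⟨C, fun ⟨⟨f, n⟩, j⟩ => indicator_apply_le' (fun hj => ?_) fun _ => zero_le⟩
    calc sample ρ n * (w j * Kf N₀ N₁ (2 ^ j) f)
        ≤ C * (decay ε n j * sample ρ j) * (w j * Kf N₀ N₁ (2 ^ j) f) :=
          mul_le_mul_left (hC ⟨(n, j), hj⟩) _
      _ = C * (decay ε n j * (ω j * Kf N₀ N₁ (2 ^ j) f)) := by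
          rw [← hω]
          ring
  have hlq : (fun p : G × ℤ => lq q ((Ici p.2).indicator fun j =>
      sample ρ p.2 * (w j * Kf N₀ N₁ (2 ^ j) p.1))) ≲
        fun p => lq q fun j => X₀ p.1 * decay ε p.2 j :=
    .lq (hweight.trans <| ((hX₀.comp fun p : (G × ℤ) × ℤ => (p.1.1, p.2)).mul_left _).trans <|
      .of_le fun p => (mul_comm _ _).le)
  simp only [lq_const_mul hq, lq_indicator_const_mul hq] at hlq
  exact hlq.trans <| (((lq_decay_dominated hq hε).comp Prod.snd).mul_left _).trans <|
    .of_le fun p => (mul_one _).le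

theorem mul_lq_Ici_dominated_Kf (hN₀ : IsQuasiNorm N₀) (hN₁ : IsQuasiNorm N₁) (hq : q ≠ 0)
    (hε : 0 < ε) (hω : ∀ n, sample ρ n * w n = ω n)
    (hρ : (fun p : {p : ℤ × ℤ // p.1 ≤ p.2} => sample ρ p.1.1) ≲
      fun p => decay ε p.1.1 p.1.2 * sample ρ p.1.2)
    (hX₀ : (fun p : G × ℤ => ω p.2 * Kf N₀ N₁ (2 ^ p.2) p.1) ≲ fun p => X₀ p.1)
    (hX₁ : (fun f => lq q fun j => w j * Kf N₀ N₁ (2 ^ j) f) ≲ X₁) :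
    (fun p : G × ℤ =>
      sample ρ p.2 * lq q ((Ici p.2).indicator fun j => w j * Kf N₀ N₁ (2 ^ j) p.1)) ≲
        fun p => Kf X₀ X₁ (ρ (2 ^ p.2)) p.1 := by
  have hg : (fun p : (G × ℤ) × G =>
      sample ρ p.1.2 * lq q ((Ici p.1.2).indicator fun j => w j * Kf N₀ N₁ (2 ^ j) p.2)) ≲
        fun p => X₀ p.2 :=
    (mul_lq_Ici_dominated hq hε hω hρ hX₀).comp fun p : (G × ℤ) × G => (p.2, p.1.2)
  refine .iInf_right <| ((lq_Ici_mul_Kf_dominated_add hN₀ hN₁).mul_left fun p =>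
    sample ρ p.1.2).trans <| .trans (.of_le fun p => (mul_add _ _ _).le) <| hg.add ?_
  exact (hX₁.comp fun p : (G × ℤ) × G => p.1.1 - p.2).mul_left _

theorem dominated_iSup_Iic_add (hN₀ : IsQuasiNorm N₀) (hN₁ : IsQuasiNorm N₁)
    (hω : Interior ε ω)
    (hX₀ : (fun p : G × ℤ => X₀ p.1) ≲
      fun p => ⨆ j, decay (-ε) p.2 j * (ω j * Kf N₀ N₁ (2 ^ j) p.1)) :
    (fun p : (G × ℤ) × G => X₀ p.2) ≲ fun p =>
      (⨆ j, (Iic p.1.2).indicator (fun j =>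
        decay (-ε) p.1.2 j * (ω j * Kf N₀ N₁ (2 ^ j) p.1.1)) j) +
      ω p.1.2 * (N₀ p.2 + ENNReal.ofReal (2 ^ p.1.2) * N₁ (p.1.1 - p.2)) := by
  have hK := (Kf_dominated_indicator_Iic_add hN₀ hN₁).mul_left fun p : ((G × ℤ) × G) × ℤ =>
    decay (-ε) p.1.1.2 p.2 * ω p.2
  have hsup : (fun p : (G × ℤ) × G => ⨆ j, decay (-ε) p.1.2 j * ω j * Kf N₀ N₁ (2 ^ j) p.2) ≲
      fun p => ⨆ j, decay (-ε) p.1.2 j * ω j *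
        ((Iic p.1.2).indicator (fun j => Kf N₀ N₁ (2 ^ j) p.1.1) j + minKernel p.1.2 j *
          (N₀ p.2 + ENNReal.ofReal (2 ^ p.1.2) * N₁ (p.1.1 - p.2))) := .iSup hK
  have hdiag := (hω.iSup_dominated.comp fun p : (G × ℤ) × G => p.1.2).mul_right fun p =>
    N₀ p.2 + ENNReal.ofReal (2 ^ p.1.2) * N₁ (p.1.1 - p.2)
  simp only [mul_assoc] at hsup
  refine (hX₀.comp fun p : (G × ℤ) × G => (p.2, p.1.2)).trans <| hsup.trans <|
    .trans (.of_le fun p => iSup_le fun j => ?_) ((Dominated.of_le fun _ => le_rfl).add hdiag)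
  rw [mul_add, mul_add, ENNReal.iSup_mul]
  refine add_le_add (le_iSup_of_le j ?_) (le_iSup_of_le j ?_)
  · rw [indicator_mul_right, indicator_mul_right]
  · ring_nf
    exact le_rfl

theorem mul_dominated_lq_Ici_add (hN₀ : IsQuasiNorm N₀) (hN₁ : IsQuasiNorm N₁)
    (hq : q ≠ 0) (hε : 0 < ε) (hω : ∀ n, sample ρ n * w n = ω n) (hw : Interior ε w)
    (hX₁ : X₁ ≲ fun f => lq q fun j => w j * Kf N₀ N₁ (2 ^ j) f) :
    (fun p : (G × ℤ) × G => sample ρ p.1.2 * X₁ (p.1.1 - p.2)) ≲ fun p =>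
      sample ρ p.1.2 * lq q ((Ici p.1.2).indicator fun j => w j * Kf N₀ N₁ (2 ^ j) p.1.1) +
      ω p.1.2 * (N₀ p.2 + ENNReal.ofReal (2 ^ p.1.2) * N₁ (p.1.1 - p.2)) := by
  have hK := (Kf_sub_dominated_indicator_Ici_add hN₀ hN₁).mul_left
    fun p : ((G × ℤ) × G) × ℤ => w p.2
  have hlq : (fun p : (G × ℤ) × G => lq q fun j => w j * Kf N₀ N₁ (2 ^ j) (p.1.1 - p.2)) ≲
      fun p => lq q fun j => (Ici p.1.2).indicator (fun j => w j * Kf N₀ N₁ (2 ^ j) p.1.1) j +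
        (N₀ p.2 + ENNReal.ofReal (2 ^ p.1.2) * N₁ (p.1.1 - p.2)) * (minKernel p.1.2 j * w j) := by
    refine .lq (hK.trans (.of_le fun p => ?_))
    dsimp only [Function.uncurry]
    rw [mul_add, indicator_mul_right]
    ring_nf
    exact le_rfl
  have hdiag := (hw.lq_dominated hq hε).comp fun p : (G × ℤ) × G => p.1.2
  refine ((hX₁.comp fun p : (G × ℤ) × G => p.1.1 - p.2).trans <| hlq.trans <|
    (lq_add_dominated _ _).trans <| (Dominated.of_le fun _ => le_rfl).add <|
      .trans (.of_le fun p => (lq_const_mul hq _ _).le) (hdiag.mul_left _)).mul_left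
        (fun p => sample ρ p.1.2) |>.trans (.of_le fun p => ?_)
  rw [mul_add, ← hω]
  ring_nf
  exact le_rfl

theorem Kf_dominated_iSup_Iic_add_mul_lq_Ici_add (hN₀ : IsQuasiNorm N₀) (hN₁ : IsQuasiNorm N₁)
    (hq : q ≠ 0) (hε : 0 < ε) (hω : ∀ n, sample ρ n * w n = ω n) (hω_top : ∀ n, ω n ≠ ∞)
    (hwi : Interior ε w) (hωi : Interior ε ω)
    (hX₀ : (fun p : G × ℤ => X₀ p.1) ≲
      fun p => ⨆ j, decay (-ε) p.2 j * (ω j * Kf N₀ N₁ (2 ^ j) p.1))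
    (hX₁ : X₁ ≲ fun f => lq q fun j => w j * Kf N₀ N₁ (2 ^ j) f) :
    (fun p : G × ℤ => Kf X₀ X₁ (ρ (2 ^ p.2)) p.1) ≲ fun p =>
      (⨆ j, (Iic p.2).indicator (fun j =>
        decay (-ε) p.2 j * (ω j * Kf N₀ N₁ (2 ^ j) p.1)) j) +
      sample ρ p.2 * lq q ((Ici p.2).indicator fun j => w j * Kf N₀ N₁ (2 ^ j) p.1) +
      2 * (ω p.2 * Kf N₀ N₁ (2 ^ p.2) p.1) := by
  have hinf : (fun p : G × ℤ => Kf X₀ X₁ (ρ (2 ^ p.2)) p.1) ≲ fun p => ⨅ g,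
      ((⨆ j, (Iic p.2).indicator (fun j => decay (-ε) p.2 j * (ω j * Kf N₀ N₁ (2 ^ j) p.1)) j) +
        ω p.2 * (N₀ g + ENNReal.ofReal (2 ^ p.2) * N₁ (p.1 - g))) +
      (sample ρ p.2 * lq q ((Ici p.2).indicator fun j => w j * Kf N₀ N₁ (2 ^ j) p.1) +
        ω p.2 * (N₀ g + ENNReal.ofReal (2 ^ p.2) * N₁ (p.1 - g))) := by
    refine .iInf_right <| .trans (.of_le fun p => Kf_le _ _ p.2) ?_
    exact (dominated_iSup_Iic_add hN₀ hN₁ hωi hX₀).add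
      (mul_dominated_lq_Ici_add hN₀ hN₁ hq hε hω hwi hX₁)
  refine hinf.trans (.of_le fun p => le_of_eq ?_)
  have htop : 2 * ω p.2 ≠ ∞ := mul_ne_top ofNat_ne_top (hω_top p.2)
  rw [← mul_assoc 2, Kf, ENNReal.mul_iInf fun h => absurd h htop, ENNReal.add_iInf]
  congr 1 with g
  ring

theorem Kf_dominated_iSup_Iic_add_mul_lq_Ici (hN₀ : IsQuasiNorm N₀) (hN₁ : IsQuasiNorm N₁)
    (hq : q ≠ 0) (hε : 0 < ε) (hω : ∀ n, sample ρ n * w n = ω n) (hω_top : ∀ n, ω n ≠ ∞)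
    (hwi : Interior ε w) (hωi : Interior ε ω)
    (hX₀ : (fun p : G × ℤ => X₀ p.1) ≲
      fun p => ⨆ j, decay (-ε) p.2 j * (ω j * Kf N₀ N₁ (2 ^ j) p.1))
    (hX₁ : X₁ ≲ fun f => lq q fun j => w j * Kf N₀ N₁ (2 ^ j) f) :
    (fun p : G × ℤ => Kf X₀ X₁ (ρ (2 ^ p.2)) p.1) ≲ fun p =>
      (⨆ j, (Iic p.2).indicator (fun j =>
        decay (-ε) p.2 j * (ω j * Kf N₀ N₁ (2 ^ j) p.1)) j) +
      sample ρ p.2 * lq q ((Ici p.2).indicator fun j => w j * Kf N₀ N₁ (2 ^ j) p.1) := by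
  refine (Kf_dominated_iSup_Iic_add_mul_lq_Ici_add hN₀ hN₁ hq hε hω hω_top hwi hωi hX₀
    hX₁).trans <| (Dominated.of_le fun _ => le_rfl).add_le ⟨2, fun p => ?_⟩
  dsimp only
  rw [ENNReal.coe_ofNat]
  gcongr
  refine le_add_right (le_iSup_of_le p.2 ?_)
  rw [indicator_of_mem self_mem_Iic, decay_self, one_mul]

end Holmstedt

/-! ### Limiting spaces as endpoints -/

section LimitingEndpoint

variable {ι : Type*} {r q : ℝ≥0∞} {s : ℝ} {β B : ℤ → ℝ≥0∞}

theorem lq_indicator_Iio_mul_le (hr : r ≠ 0) (hq : q ≠ 0) (β x : ℤ → ℝ≥0∞) (n : ℤ) :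
    lq r ((Iio n).indicator β) * x n ≤ lq r fun k => β k * lq q ((Ici k).indicator x) := by
  rw [mul_comm, ← lq_indicator_const_mul hr]
  refine lq_mono fun k => indicator_apply_le' (fun hk => ?_) fun _ => zero_le
  rw [mul_comm]
  gcongr
  simpa [(mem_Iio.1 hk).le] using le_lq hq ((Ici k).indicator x) n

theorem mul_decay_mul_dominated (hs : 0 ≤ s) (hβ : β ≲ B)
    (hB : (fun p : ℤ × ℤ => decay s p.1 p.2 * B p.1) ≲ fun p => B p.2) :
    (fun p : {p : ℤ × ℤ × ℤ // p.2.1 ≤ p.2.2} =>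
      B p.1.1 * (decay (s + (s + s)) p.1.1 p.1.2.2 * β p.1.2.1)) ≲ fun p =>
        ((Iio p.1.1).indicator β p.1.2.1 + B p.1.1 * decay s p.1.1 p.1.2.1) *
          (decay s p.1.1 p.1.2.2 * B p.1.2.2) := by
  obtain ⟨C, hC⟩ := hB
  obtain ⟨D, hD⟩ := hβ
  refine .of_cases (p := fun p => p.1.2.1 < p.1.1) ⟨C, ?_⟩ ⟨D * C, ?_⟩
  · intro ⟨⟨⟨n, k, j⟩, _⟩, (hkn : k < n)⟩
    calc B n * (decay (s + (s + s)) n j * β k)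
        = β k * (decay s n j * decay s n j) * (decay s n j * B n) := by
          rw [decay_add, decay_add]
          ring
      _ ≤ (β k + B n * decay s n k) * (decay s n j * 1) * (C * B j) := by
          refine mul_le_mul' ?_ (hC (n, j))
          gcongr
          exacts [le_self_add, decay_le_one hs n j]
      _ = C * (((Iio n).indicator β k + B n * decay s n k) * (decay s n j * B j)) := by
          rw [indicator_of_mem (mem_Iio.2 hkn)]
          ring
  · intro ⟨⟨⟨n, k, j⟩, (hkj : k ≤ j)⟩, (hkn : ¬k < n)⟩
    calc B n * (decay (s + (s + s)) n j * β k)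
        ≤ B n * (decay s n j * (decay s n k * decay s k j) * (D * B k)) := by
          rw [decay_add, decay_add]
          gcongr
          exacts [decay_le_decay_of_le_right hs (not_lt.1 hkn) hkj,
            decay_le_decay_of_le_left hs (not_lt.1 hkn) hkj, hD k]
      _ = D * (B n * decay s n k) * decay s n j * (decay s k j * B k) := by ring
      _ ≤ D * ((Iio n).indicator β k + B n * decay s n k) * decay s n j * (C * B j) := by
          refine mul_le_mul' ?_ (hC (k, j))
          gcongr
          exact le_add_self
      _ = (D * C : ℝ≥0) *
            (((Iio n).indicator β k + B n * decay s n k) * (decay s n j * B j)) := by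
          push_cast
          ring

theorem mul_lq_Ici_dominated_iSup (hq : q ≠ 0) (hs : 0 < s) (hβ : β ≲ B)
    (hB : (fun p : ℤ × ℤ => decay s p.1 p.2 * B p.1) ≲ fun p => B p.2) (x : ι → ℤ → ℝ≥0∞) :
    (fun p : (ι × ℤ) × ℤ => B p.1.2 * (β p.2 * lq q ((Ici p.2).indicator (x p.1.1)))) ≲ fun p =>
      (⨆ j, decay (-(s + (s + s))) p.1.2 j * (B j * x p.1.1 j)) *
        ((Iio p.1.2).indicator β p.2 + B p.1.2 * decay s p.1.2 p.2) := by
  set S : ι × ℤ → ℝ≥0∞ := fun p => ⨆ j, decay (-(s + (s + s))) p.2 j * (B j * x p.1 j)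
  set g : ℤ → ℤ → ℝ≥0∞ := fun n k => (Iio n).indicator β k + B n * decay s n k
  obtain ⟨C, hC⟩ := mul_decay_mul_dominated hs.le hβ hB
  have hpoint : (fun p : ((ι × ℤ) × ℤ) × ℤ =>
      (Ici p.1.2).indicator (fun j => B p.1.1.2 * β p.1.2 * x p.1.1.1 j) p.2) ≲ fun p =>
        S p.1.1 * g p.1.1.2 p.1.2 * decay s p.1.1.2 p.2 := by
    refine ⟨C, fun ⟨⟨⟨f, n⟩, k⟩, j⟩ => indicator_apply_le' (fun hkj => ?_) fun _ => zero_le⟩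
    have hunit : decay (s + (s + s)) n j * decay (-(s + (s + s))) n j = 1 := by
      rw [← decay_add, add_neg_cancel]
      simp [decay]
    calc B n * β k * x f j
        = B n * (decay (s + (s + s)) n j * β k) * (decay (-(s + (s + s))) n j * x f j) := by
          rw [← one_mul (B n * β k * x f j), ← hunit]
          ring
      _ ≤ C * (g n k * (decay s n j * B j)) * (decay (-(s + (s + s))) n j * x f j) :=
          mul_le_mul_left (hC ⟨(n, k, j), hkj⟩) _
      _ = C * ((decay (-(s + (s + s))) n j * (B j * x f j)) * g n k * decay s n j) := by ring
      _ ≤ C * (S (f, n) * g n k * decay s n j) := by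
          gcongr
          exact le_iSup (fun j => decay (-(s + (s + s))) n j * (B j * x f j)) j
  have hlq : (fun p : (ι × ℤ) × ℤ => lq q ((Ici p.2).indicator fun j =>
      B p.1.2 * β p.2 * x p.1.1 j)) ≲ fun p => lq q fun j =>
        S p.1 * g p.1.2 p.2 * decay s p.1.2 j := .lq hpoint
  simp only [lq_const_mul hq, lq_indicator_const_mul hq, mul_assoc (B _)] at hlq
  exact hlq.trans <| (((lq_decay_dominated hq hs).comp fun p : (ι × ℤ) × ℤ => p.1.2).mul_left
    _).trans <| .of_le fun p => (mul_one _).le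

theorem lq_mul_lq_Ici_dominated_iSup (hr : r ≠ 0) (hq : q ≠ 0) (hs : 0 < s)
    (hB_pos : ∀ n, B n ≠ 0) (hB_top : ∀ n, B n ≠ ∞) (hβ : β ≲ B)
    (hβB : (fun n => lq r ((Iio n).indicator β)) ≲ B)
    (hB : (fun p : ℤ × ℤ => decay s p.1 p.2 * B p.1) ≲ fun p => B p.2) (x : ι → ℤ → ℝ≥0∞) :
    (fun p : ι × ℤ => lq r fun k => β k * lq q ((Ici k).indicator (x p.1))) ≲
      fun p => ⨆ j, decay (-(s + (s + s))) p.2 j * (B j * x p.1 j) := by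
  set S : ι × ℤ → ℝ≥0∞ := fun p => ⨆ j, decay (-(s + (s + s))) p.2 j * (B j * x p.1 j)
  have hlq : (fun p : ι × ℤ => lq r fun k =>
      B p.2 * (β k * lq q ((Ici k).indicator (x p.1)))) ≲ fun p => lq r fun k =>
        S p * ((Iio p.2).indicator β k + B p.2 * decay s p.2 k) :=
    .lq (mul_lq_Ici_dominated_iSup hq hs hβ hB x)
  have hkernel : (fun n => lq r fun k => (Iio n).indicator β k + B n * decay s n k) ≲ B := by
    refine (lq_add_dominated _ _).trans (hβB.add_le ?_)
    simp only [lq_const_mul hr]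
    exact ((lq_decay_dominated hr hs).mul_left B).trans (.of_le fun n => (mul_one _).le)
  simp only [lq_const_mul hr] at hlq
  obtain ⟨C, hC⟩ := hlq.trans ((hkernel.comp Prod.snd).mul_left S)
  refine ⟨C, fun p => (ENNReal.mul_le_mul_iff_right (hB_pos p.2) (hB_top p.2)).1 ?_⟩
  rw [mul_left_comm, mul_comm _ (S p)]
  exact hC p

variable {G : Type*} [AddCommGroup G] {N₀ N₁ : G → ℝ≥0∞} {σ : ℝ} {a b : ℝ → ℝ}

theorem sample_mul_toReal_headNorm (hr : r ≠ 0) (ha : IsSlow a) {d : ℝ → ℝ} (hd : IsSlow d)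
    (hfin : headNorm r d 1 ≠ ∞) (σ : ℝ) (n : ℤ) :
    sample (fun t => t ^ (-σ) * (a t * (headNorm r d t).toReal)) n =
      headNorm r d (2 ^ n) * sample (fun t => t ^ (-σ) * a t) n := by
  simp only [← mul_assoc]
  rw [sample_mul fun t ht => mul_pos (Real.rpow_pos_of_pos ht _) (ha.pos ht), mul_comm, sample,
    ofReal_toReal (headNorm_ne_top hr hd hfin _)]

theorem mul_Kf_dominated_normR (hr : r ≠ 0) (hq : q ≠ 0) (ha : IsSlow a) (hb : IsSlow b)
    (hfin : headNorm r (fun t => b t / a t) 1 ≠ ∞) (σ : ℝ) :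
    (fun p : G × ℤ =>
      sample (fun t => t ^ (-σ) * (a t * (headNorm r (fun t => b t / a t) t).toReal)) p.2 *
        Kf N₀ N₁ (2 ^ p.2) p.1) ≲ fun p => normR N₀ N₁ σ r q b a p.1 := by
  have hba := hb.div ha
  simp only [sample_mul_toReal_headNorm hr ha hba hfin, mul_assoc]
  refine (((headNorm_comparable hr hba).1.comp fun p : G × ℤ => p.2).mul_right _).trans <|
    .trans (.of_le fun p => ?_)
      ((normR_comparable (σ := σ) hr hq (hba 1 one_pos) ha).2.comp fun p : G × ℤ => p.1)
  exact lq_indicator_Iio_mul_le hr hq _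
    (fun j => sample (fun u => u ^ (-σ) * a u) j * Kf N₀ N₁ (2 ^ j) p.1) p.2

theorem normR_dominated_iSup (hr : r ≠ 0) (hq : q ≠ 0) (ha : IsSlow a) (hb : IsSlow b)
    (hfin : headNorm r (fun t => b t / a t) 1 ≠ ∞) {ε : ℝ} (hε : 0 < ε) (σ : ℝ) :
    (fun p : G × ℤ => normR N₀ N₁ σ r q b a p.1) ≲ fun p => ⨆ j, decay (-ε) p.2 j *
      (sample (fun t => t ^ (-σ) * (a t * (headNorm r (fun t => b t / a t) t).toReal)) j *
        Kf N₀ N₁ (2 ^ j) p.1) := by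
  have hba := hb.div ha
  have hslow : (fun p : ℤ × ℤ => decay (ε / 3) p.1 p.2 *
      headNorm r (fun t => b t / a t) (2 ^ p.1)) ≲
        fun p => headNorm r (fun t => b t / a t) (2 ^ p.2) := by
    simpa only [sample, ofReal_toReal (headNorm_ne_top hr hba hfin _)] using
      (hba.headNorm hr hfin).decay_mul_sample_dominated (ε := ε / 3) (by positivity)
  have hthirds : ε / 3 + (ε / 3 + ε / 3) = ε := by ring
  refine ((normR_comparable hr hq (hba 1 one_pos) ha).1.comp fun p : G × ℤ => p.1).trans ?_
  simp only [sample_mul_toReal_headNorm hr ha hba hfin, mul_assoc (headNorm _ _ _)]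
  rw [← hthirds]
  exact lq_mul_lq_Ici_dominated_iSup hr hq (by positivity)
    (fun n => (headNorm_pos hr hba (by positivity)).ne') (fun n => headNorm_ne_top hr hba hfin _)
    (sample_dominated_headNorm hr hba) (headNorm_comparable hr hba).2 hslow
    fun f j => sample (fun u => u ^ (-σ) * a u) j * Kf N₀ N₁ (2 ^ j) f

end LimitingEndpoint

/-! ### Change of variables -/

section ChangeOfVariables

variable {ι : Type*} {q : ℝ≥0∞} {Φ : ι → ℝ → ℝ≥0∞} {x y : ℤ → ℝ} {b C R : ℝ}

theorem encard_preimage_singleton_le {σ : ℤ → ℤ} {D : ℕ} (h : ∀ n m, σ n = σ m → m - n ≤ D)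
    (k : ℤ) : (σ ⁻¹' {k}).encard ≤ (2 * D + 1 : ℕ) := by
  rcases (σ ⁻¹' {k}).eq_empty_or_nonempty with he | ⟨n, rfl⟩
  · simp [he]
  have hsub : σ ⁻¹' {σ n} ⊆ Finset.Icc (n - D) (n + D) := fun m (hm : σ m = σ n) => by
    have h₁ := h n m hm.symm
    have h₂ := h m n hm
    rw [Finset.coe_Icc, mem_Icc]
    lia
  refine (encard_le_encard hsub).trans_eq ?_
  rw [encard_coe_eq_coe_finsetCard, Int.card_Icc]
  congr 1
  lia

theorem exists_forall_sub_le (hb : 1 < b) (hx : ∀ n, 0 < x n)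
    (hgrow : ∀ n m, n ≤ m → x n * b ^ (m - n) ≤ C * x m) (A : ℝ) :
    ∃ D : ℕ, ∀ n m, x m ≤ A * x n → m - n ≤ D := by
  obtain ⟨D, hD⟩ := pow_unbounded_of_one_lt (|C| * A) hb
  refine ⟨D, fun n m hA => le_of_not_gt fun hlt => hD.not_ge ?_⟩
  refine le_of_mul_le_mul_left ?_ (hx n)
  calc x n * b ^ D ≤ x n * b ^ (m - n) := by
        gcongr
        · exact (hx n).le
        · rw [← zpow_natCast]
          exact zpow_le_zpow_right₀ hb.le hlt.le
    _ ≤ |C| * x m := (hgrow n m (by lia)).trans (by gcongr; exacts [(hx m).le, le_abs_self C])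
    _ ≤ |C| * (A * x n) := by gcongr
    _ = x n * (|C| * A) := by ring

theorem Doubling.lq_dominated (hΦ : Doubling Φ) (hx : ∀ n, 0 < x n) (hy : ∀ n, 0 < y n)
    (hR : 1 ≤ R) {σ : ℤ → ℤ} (hσ : ∀ n, x n ≤ R * y (σ n) ∧ y (σ n) ≤ R * x n)
    (hb : 1 < b) (hgrow : ∀ n m, n ≤ m → x n * b ^ (m - n) ≤ C * x m) :
    (fun i => lq q fun n => Φ i (x n)) ≲ fun i => lq q fun n => Φ i (y n) := by
  obtain ⟨D, hD⟩ := exists_forall_sub_le hb hx hgrow (R * R)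
  have hfib : ∀ n m, σ n = σ m → m - n ≤ D := fun n m h => hD n m <| by
    rw [mul_assoc]
    exact (hσ m).1.trans (by gcongr; exact h ▸ (hσ n).2)
  obtain ⟨M, hM⟩ := hΦ R hR
  have hpoint : (fun p : ι × ℤ => Φ p.1 (x p.2)) ≲ fun p => Φ p.1 (y (σ p.2)) :=
    ⟨M, fun p => hM p.1 _ _ (hx _) (hy _) (hσ _).1 (hσ _).2⟩
  exact (Dominated.lq hpoint).trans
    ((lq_comp_dominated (encard_preimage_singleton_le hfib)).comp fun i n => Φ i (y n))

theorem exists_le_and_lt_succ (hb : 1 < b) (hx : ∀ n, 0 < x n)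
    (hgrow : ∀ n m, n ≤ m → x n * b ^ (m - n) ≤ C * x m) {t : ℝ} (ht : 0 < t) :
    ∃ n, x n ≤ t ∧ t < x (n + 1) := by
  obtain ⟨D, hD⟩ := exists_forall_sub_le hb hx hgrow (t / x 0)
  obtain ⟨N, hN⟩ := pow_unbounded_of_one_lt (C * x 0 / t) hb
  have hbdd : ∃ B, ∀ n, x n ≤ t → n ≤ B := ⟨D, fun n hn => by
    simpa using hD 0 n (by rwa [div_mul_cancel₀ _ (hx 0).ne'])⟩
  have hinh : ∃ n, x n ≤ t := ⟨-N, by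
    have h := hgrow (-N) 0 (by lia)
    rw [zero_sub, neg_neg, zpow_natCast] at h
    have hN' := ((div_lt_iff₀ ht).1 hN).le.trans_eq (mul_comm _ _)
    exact le_of_mul_le_mul_right (h.trans hN') (pow_pos (one_pos.trans hb) N)⟩
  obtain ⟨n, hn, hmax⟩ := Int.exists_greatest_of_bdd hbdd hinh
  exact ⟨n, hn, lt_of_not_ge fun h => (lt_add_one n).not_ge (hmax _ h)⟩

theorem Doubling.lq_zpow_comparable (hΦ : Doubling Φ) (hx : ∀ n, 0 < x n) (hR : 1 ≤ R)
    (hstep : ∀ n, x (n + 1) ≤ R * x n) (hb : 1 < b)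
    (hgrow : ∀ n m, n ≤ m → x n * b ^ (m - n) ≤ C * x m) :
    (fun i => lq q fun n => Φ i (2 ^ n)) ≲≳ fun i => lq q fun n => Φ i (x n) := by
  have hpow : ∀ n : ℤ, (0 : ℝ) < 2 ^ n := fun n => by positivity
  choose τ hτ using fun k : ℤ => exists_le_and_lt_succ hb hx hgrow (hpow k)
  have hlog : ∀ n, (2 : ℝ) ^ Int.log 2 (x n) ≤ x n ∧ x n < 2 ^ (Int.log 2 (x n) + 1) := fun n =>
    ⟨mod_cast Int.zpow_log_le_self Nat.one_lt_two (hx n),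
      mod_cast Int.lt_zpow_succ_log_self Nat.one_lt_two (x n)⟩
  constructor
  · refine hΦ.lq_dominated hpow hx hR (σ := τ) (fun k => ⟨?_, ?_⟩) one_lt_two (C := 1)
      fun n m _ => ?_
    · exact (hτ k).2.le.trans (hstep _)
    · exact (hτ k).1.trans (le_mul_of_one_le_left (hpow k).le hR)
    · rw [← zpow_add₀ two_ne_zero, add_sub_cancel, one_mul]
  · refine hΦ.lq_dominated hx hpow one_le_two (σ := fun n => Int.log 2 (x n))
      (fun n => ⟨?_, ?_⟩) hb hgrow
    · rw [mul_comm, ← zpow_add_one₀ two_ne_zero]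
      exact (hlog n).2.le
    · exact (hlog n).1.trans (le_mul_of_one_le_left (hx n).le one_le_two)

theorem Doubling.lq_comp_rpow_mul_comparable (hΦ : Doubling Φ) {δ : ℝ} (hδ : 0 < δ) {V : ℝ → ℝ}
    (hV : IsSlow V) : (fun i => lq q fun n => Φ i (2 ^ n)) ≲≳
      fun i => lq q fun n => Φ i ((2 ^ n) ^ δ * V (2 ^ n)) := by
  have hpos : ∀ n : ℤ, (0 : ℝ) < (2 ^ n) ^ δ * V (2 ^ n) := fun n =>
    mul_pos (by positivity) (hV.pos (by positivity))
  obtain ⟨-, C, -, hρC⟩ := hV.potterBound_rpow_mul δ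
  obtain ⟨-, D, -, hVD⟩ := hV (δ / 2) (half_pos hδ)
  refine hΦ.lq_zpow_comparable hpos (R := max 1 (C * 2 ^ (|δ| + 1))) (b := 2 ^ (δ / 2)) (C := D)
    (le_max_left ..) (fun n => ?_) (Real.one_lt_rpow one_lt_two (half_pos hδ)) fun n m hnm => ?_
  · have h : (2 : ℝ) ^ (n + 1) = 2 * 2 ^ n := by rw [zpow_add_one₀ two_ne_zero, mul_comm]
    have hn : (0 : ℝ) < 2 ^ n := by positivity
    refine (hρC _ _ 2 (by positivity) hn one_le_two h.le (by linarith)).trans ?_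
    exact mul_le_mul_of_nonneg_right (le_max_right ..) (hpos n).le
  · have hVnm := hVD (2 ^ n) (2 ^ m) (2 ^ (m - n)) (by positivity) (by positivity)
      (one_le_zpow₀ one_le_two (sub_nonneg.2 hnm))
      (by rw [← zpow_add₀ two_ne_zero]; gcongr; exacts [one_le_two, by linarith])
      (by rw [← zpow_add₀ two_ne_zero, sub_add_cancel])
    have hpow : ∀ (s : ℝ) (k : ℤ), ((2 : ℝ) ^ k) ^ s = 2 ^ (s * k) := fun s k => by
      rw [← Real.rpow_intCast_mul two_pos.le, mul_comm]
    calc ((2 : ℝ) ^ n) ^ δ * V (2 ^ n) * (2 ^ (δ / 2)) ^ (m - n)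
        ≤ (2 ^ n) ^ δ * (D * (2 ^ (m - n)) ^ (δ / 2) * V (2 ^ m)) * (2 ^ (δ / 2)) ^ (m - n) := by
          gcongr
      _ = D * (2 ^ (δ * n + δ / 2 * (m - n) + δ / 2 * (m - n)) * V (2 ^ m)) := by
          rw [hpow, hpow, ← Real.rpow_mul_intCast two_pos.le, Real.rpow_add two_pos,
            Real.rpow_add two_pos]
          push_cast
          ring
      _ = D * ((2 ^ m) ^ δ * V (2 ^ m)) := by
          rw [hpow]
          ring_nf

end ChangeOfVariables

/-! ### Reiteration -/

/-- The K-functional class of a space `X` of exponent `θ` with slowly varying factor `c`: the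
analogue of `Ā_{θ,1;c} ⊆ X ⊆ Ā_{θ,∞;c}` in which the first inclusion is weakened by an arbitrarily
small geometric loss around any given dyadic point. Limiting `𝓡`-spaces have this property, and it
is all that reiteration needs to know about the left endpoint space. -/
structure IsOfClass {G : Type*} [AddCommGroup G] (N₀ N₁ X : G → ℝ≥0∞) (θ : ℝ) (c : ℝ → ℝ) :
    Prop where
  sample_mul_Kf_dominated : (fun p : G × ℤ =>
    sample (fun t => t ^ (-θ) * c t) p.2 * Kf N₀ N₁ (2 ^ p.2) p.1) ≲ fun p => X p.1
  dominated_iSup : ∀ ε, 0 < ε → (fun p : G × ℤ => X p.1) ≲ fun p => ⨆ j, decay (-ε) p.2 j *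
    (sample (fun t => t ^ (-θ) * c t) j * Kf N₀ N₁ (2 ^ j) p.1)

section Reiteration

variable {G : Type*} [AddCommGroup G] {N₀ N₁ X X₀ X₁ : G → ℝ≥0∞} {q r : ℝ≥0∞}
  {θ θ₀ θ₁ δ : ℝ} {a b c ρ V : ℝ → ℝ}

theorem isOfClass_normR (hr : r ≠ 0) (hq : q ≠ 0) (ha : IsSlow a) (hb : IsSlow b)
    (hfin : headNorm r (fun t => b t / a t) 1 ≠ ∞) :
    IsOfClass N₀ N₁ (normR N₀ N₁ θ r q b a) θ
      fun t => a t * (headNorm r (fun t => b t / a t) t).toReal where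
  sample_mul_Kf_dominated := mul_Kf_dominated_normR hr hq ha hb hfin θ
  dominated_iSup _ hε := normR_dominated_iSup hr hq ha hb hfin hε θ

theorem mul_lq_Ici_rpow_dominated (hr : r ≠ 0) (hq : q ≠ 0) (hδ : 0 < δ) (hV : IsSlow V)
    {ι : Type*} (F : ι → ℤ → ℝ≥0∞) :
    (fun i => lq r fun k => sample (fun t => t ^ δ * V t) k * lq q ((Ici k).indicator (F i))) ≲
      fun i => lq r fun j => sample (fun t => t ^ δ * V t) j * F i j := by
  set T := sample fun t => t ^ δ * V t
  have hinner : (fun p : ι × ℤ => T p.2 * lq q ((Ici p.2).indicator (F p.1))) ≲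
      fun p => lq q fun j => decay (δ / 4 + δ / 4) p.2 j * (T j * F p.1 j) := by
    obtain ⟨C, hC⟩ := hV.sample_rpow_mul_dominated_of_le hδ.le (half_lt_self hδ)
    refine ⟨C, fun ⟨i, k⟩ => ?_⟩
    simp only [← lq_indicator_const_mul hq, ← lq_const_mul hq]
    refine lq_mono fun j => indicator_apply_le' (fun hj : k ≤ j => ?_) fun _ => zero_le
    calc T k * F i j ≤ C * (decay (δ / 2) k j * T j) * F i j := by
          gcongr
          exact hC ⟨(k, j), hj⟩
      _ = C * (decay (δ / 4 + δ / 4) k j * (T j * F i j)) := by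
          rw [show δ / 4 + δ / 4 = δ / 2 by ring]
          ring
  calc (fun i => lq r fun k => T k * lq q ((Ici k).indicator (F i)))
      ≲ fun i => lq r fun k => ⨆ j, decay (δ / 4) k j * (T j * F i j) :=
        .lq (hinner.trans (lq_decay_add_mul_dominated hq (by positivity) _ _ _))
    _ ≲ fun i => lq r fun j => T j * F i j :=
        lq_iSup_decay_mul_dominated hr (by positivity) _

theorem normR_comparable_normK (hr : r ≠ 0) (hq : q ≠ 0) (hb : IsSlow b) (hV : IsSlow V)
    (hδ : 0 < δ) (hc : ∀ t, 0 < t → c t = t ^ δ * V t) :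
    normR N₀ N₁ θ r q c b ≲≳ normK N₀ N₁ (θ - δ) r V := by
  have hVb := hV.div hb
  have hcb : ∀ t, 0 < t → c t / b t = t ^ δ * (V t / b t) := fun t ht => by
    rw [hc t ht, mul_div_assoc]
  have hweight : ∀ n, sample (fun t => t ^ (-(θ - δ)) * V t) n =
      sample (fun t => t ^ δ * (V t / b t)) n * sample (fun t => t ^ (-θ) * b t) n := fun n => by
    rw [← sample_mul fun t ht => mul_pos (by positivity) (hVb.pos ht)]
    refine sample_congr (fun t ht => ?_) n
    have := (hb.pos ht).ne'
    rw [neg_sub, sub_eq_add_neg, Real.rpow_add ht]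
    field_simp
  refine (normR_comparable hr hq (.congr (hVb.potterBound_rpow_mul δ) hcb) hb).trans
    (.trans ?_ (normK_comparable hr hV).symm)
  simp only [hweight, mul_assoc, sample_congr hcb]
  exact ⟨mul_lq_Ici_rpow_dominated hr hq hδ hVb _,
    .of_le fun f => lq_mono fun k => mul_le_mul_right (le_lq_indicator_Ici hq _ k) _⟩

theorem normK_comparable_lq_comp (hr : r ≠ 0) (ha : IsSlow a) (hδ : 0 < δ) (hV : IsSlow V)
    (hρ : ρ = fun t => t ^ δ * V t) :
    normK X₀ X₁ θ r a ≲≳ fun f =>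
      lq r fun n => sample (fun t => ρ t ^ (-θ) * a (ρ t)) n * Kf X₀ X₁ (ρ (2 ^ n)) f := by
  subst hρ
  exact (normK_comparable hr ha).trans
    ((doubling_rpow_mul_mul_Kf ha θ).lq_comp_rpow_mul_comparable hδ hV)

theorem normR_comparable_lq_comp (hr : r ≠ 0) (hq : q ≠ 0) (ha : IsSlow a) (hb : IsSlow b)
    (hδ : 0 < δ) (hV : IsSlow V) (hρ : ρ = fun t => t ^ δ * V t) :
    normR N₀ N₁ θ₁ r q (fun t => b t * (ρ t ^ (1 - θ) * a (ρ t))) b ≲≳ fun f =>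
      lq r fun n => sample (fun t => ρ t ^ (-θ) * a (ρ t)) n * (sample ρ n * lq q
        ((Ici n).indicator fun j =>
          sample (fun u => u ^ (-θ₁) * b u) j * Kf N₀ N₁ (2 ^ j) f)) := by
  have hρP : PotterBound (|δ| + 1) ρ := hρ ▸ hV.potterBound_rpow_mul δ
  have haρ : IsSlow fun t => a (ρ t) := ha.comp hρP (by positivity)
  have hquot : ∀ t, 0 < t → b t * (ρ t ^ (1 - θ) * a (ρ t)) / b t = ρ t ^ (1 - θ) * a (ρ t) :=
    fun t ht => mul_div_cancel_left₀ _ (hb.pos ht).ne'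
  have hfactor : ∀ n, sample (fun t => b t * (ρ t ^ (1 - θ) * a (ρ t)) / b t) n =
      sample (fun t => ρ t ^ (-θ) * a (ρ t)) n * sample ρ n := fun n => by
    rw [← sample_mul fun t ht => mul_pos (Real.rpow_pos_of_pos (hρP.pos ht) _) (haρ.pos ht)]
    refine sample_congr (fun t ht => ?_) n
    rw [hquot t ht, sub_eq_neg_add, Real.rpow_add (hρP.pos ht), Real.rpow_one, mul_right_comm]
  refine (normR_comparable hr hq (((hρP.rpow _).mul (haρ 1 one_pos)).congr hquot) hb).trans ?_
  simp only [hfactor, mul_assoc]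
  exact ⟨.of_le fun _ => le_rfl, .of_le fun _ => le_rfl⟩

theorem lq_mul_iSup_Iic_dominated (hr : r ≠ 0) {ε : ℝ} (hε : 0 < ε) {T : ℤ → ℝ≥0∞}
    (hT : (fun p : {p : ℤ × ℤ // p.2 ≤ p.1} => T p.1.1) ≲
      fun p => decay (ε + ε) p.1.1 p.1.2 * T p.1.2) {ι : Type*} (F : ι → ℤ → ℝ≥0∞) :
    (fun i => lq r fun n => T n * ⨆ j, (Iic n).indicator (fun j => decay (-ε) n j * F i j) j) ≲
      fun i => lq r fun j => T j * F i j := by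
  refine .trans (.lq ?_) (lq_iSup_decay_mul_dominated hr hε fun i j => T j * F i j)
  obtain ⟨C, hC⟩ := hT
  refine ⟨C, fun ⟨i, n⟩ => ?_⟩
  dsimp only [Function.uncurry_apply_pair]
  simp only [ENNReal.mul_iSup]
  refine iSup_mono fun j => ?_
  rw [← indicator_const_mul]
  refine indicator_apply_le' (fun hj : j ≤ n => ?_) fun _ => zero_le
  calc T n * (decay (-ε) n j * F i j)
      ≤ C * (decay (ε + ε) n j * T j) * (decay (-ε) n j * F i j) := by
        gcongr
        exact hC ⟨(n, j), hj⟩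
    _ = C * (decay (ε + ε + -ε) n j * (T j * F i j)) := by
        rw [decay_add (ε + ε)]
        ring
    _ = C * (decay ε n j * (T j * F i j)) := by rw [add_neg_cancel_right]

theorem sample_rpow_neg_mul_comp_dominated (ha : IsSlow a) (hV : IsSlow V) (hδ : 0 < δ)
    (hθ : 0 < θ) (hρ : ρ = fun t => t ^ δ * V t) {ε : ℝ} (hε : ε < θ * δ) :
    (fun p : {p : ℤ × ℤ // p.2 ≤ p.1} => sample (fun t => ρ t ^ (-θ) * a (ρ t)) p.1.1) ≲
      fun p => decay ε p.1.1 p.1.2 * sample (fun t => ρ t ^ (-θ) * a (ρ t)) p.1.2 := by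
  subst hρ
  have haρ := ha.comp (hV.potterBound_rpow_mul δ) (by positivity)
  have hfactor : ∀ t, 0 < t → (t ^ δ * V t) ^ (-θ) * a (t ^ δ * V t) =
      t ^ (-(θ * δ)) * (V t ^ (-θ) * a (t ^ δ * V t)) := fun t ht => by
    rw [Real.mul_rpow (by positivity) (hV.pos ht).le, ← Real.rpow_mul ht.le, mul_assoc]
    ring_nf
  simp only [sample_congr hfactor]
  exact ((hV.rpow _).mul haρ).sample_rpow_neg_mul_dominated_of_ge (by positivity) hε

theorem sample_rpow_sub_mul_div_mul (hb : IsSlow b) (hc : IsSlow c) (n : ℤ) :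
    sample (fun t => t ^ (θ₁ - θ₀) * (c t / b t)) n * sample (fun t => t ^ (-θ₁) * b t) n =
      sample (fun t => t ^ (-θ₀) * c t) n := by
  rw [← sample_mul fun t ht => mul_pos (by positivity) ((hc.div hb).pos ht)]
  refine sample_congr (fun t ht => ?_) n
  have := (hb.pos ht).ne'
  rw [show -θ₀ = θ₁ - θ₀ + -θ₁ by ring, Real.rpow_add ht]
  field_simp

namespace IsOfClass

theorem normR_dominated_normK (hX : IsOfClass N₀ N₁ X θ₀ c) (hN₀ : IsQuasiNorm N₀)
    (hN₁ : IsQuasiNorm N₁) (hr : r ≠ 0) (hq : q ≠ 0) (ha : IsSlow a) (hb : IsSlow b)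
    (hc : IsSlow c) (h₀₁ : θ₀ < θ₁) (hρ : ρ = fun t => t ^ (θ₁ - θ₀) * (c t / b t)) :
    normR N₀ N₁ θ₁ r q (fun t => b t * (ρ t ^ (1 - θ) * a (ρ t))) b ≲
      normK X (normK N₀ N₁ θ₁ q b) θ r a := by
  have hδ : 0 < θ₁ - θ₀ := sub_pos.2 h₀₁
  have hV := hc.div hb
  have hlower := mul_lq_Ici_dominated_Kf hN₀ hN₁ hq (half_pos hδ)
    (sample_rpow_sub_mul_div_mul hb hc)
    (hV.sample_rpow_mul_dominated_of_le hδ.le (half_lt_self hδ))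
    hX.sample_mul_Kf_dominated (normK_comparable hq hb).2
  subst hρ
  exact (normR_comparable_lq_comp hr hq ha hb hδ hV rfl).1.trans
    (.trans (.lq (hlower.mul_left _)) (normK_comparable_lq_comp hr ha hδ hV rfl).2)

theorem normK_dominated_normR (hX : IsOfClass N₀ N₁ X θ₀ c) (hN₀ : IsQuasiNorm N₀)
    (hN₁ : IsQuasiNorm N₁) (hr : r ≠ 0) (hq : q ≠ 0) (ha : IsSlow a) (hb : IsSlow b)
    (hc : IsSlow c) (h₀ : 0 < θ₀) (h₀₁ : θ₀ < θ₁) (h₁ : θ₁ < 1) (hθ : 0 < θ)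
    (hρ : ρ = fun t => t ^ (θ₁ - θ₀) * (c t / b t)) :
    normK X (normK N₀ N₁ θ₁ q b) θ r a ≲
      normR N₀ N₁ θ₁ r q (fun t => b t * (ρ t ^ (1 - θ) * a (ρ t))) b := by
  have hδ : 0 < θ₁ - θ₀ := sub_pos.2 h₀₁
  have hV := hc.div hb
  obtain ⟨ε, hε, hεlt⟩ := exists_between (a₁ := 0)
    (a₂ := min (min θ₀ (1 - θ₁)) (θ * (θ₁ - θ₀) / 2)) (by simp [*, mul_pos hθ hδ])
  simp only [lt_min_iff] at hεlt
  obtain ⟨⟨hε₀, hε₁⟩, hεθ⟩ := hεlt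
  have hupper := Kf_dominated_iSup_Iic_add_mul_lq_Ici hN₀ hN₁ hq hε
    (sample_rpow_sub_mul_div_mul hb hc) (fun n => sample_ne_top _ n)
    (hb.interior hε (by linarith) hε₁) (hc.interior hε hε₀ (by linarith))
    (hX.dominated_iSup ε hε) (normK_comparable hq hb).1
  set T := sample fun t => ρ t ^ (-θ) * a (ρ t)
  set w := sample fun t => t ^ (-θ₁) * b t
  set ωκ : G → ℤ → ℝ≥0∞ := fun f j => sample (fun t => t ^ (-θ₀) * c t) j * Kf N₀ N₁ (2 ^ j) f
  set ρJ : G → ℤ → ℝ≥0∞ := fun f n =>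
    sample ρ n * lq q ((Ici n).indicator fun j => w j * Kf N₀ N₁ (2 ^ j) f)
  have hT : (fun p : {p : ℤ × ℤ // p.2 ≤ p.1} => T p.1.1) ≲
      fun p => decay (ε + ε) p.1.1 p.1.2 * T p.1.2 :=
    sample_rpow_neg_mul_comp_dominated ha hV hδ hθ hρ (by linarith)
  have hωκ : ∀ f n, ωκ f n ≤ ρJ f n := fun f n => by
    dsimp only [ωκ, ρJ]
    rw [← sample_rpow_sub_mul_div_mul hb hc, ← hρ, mul_assoc]
    exact mul_le_mul_right (le_lq_indicator_Ici hq (fun j => w j * Kf N₀ N₁ (2 ^ j) f) n) _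
  calc normK X (normK N₀ N₁ θ₁ q b) θ r a
    _ ≲ fun f => lq r fun n => T n * Kf X (normK N₀ N₁ θ₁ q b) (ρ (2 ^ n)) f :=
        (normK_comparable_lq_comp hr ha hδ hV hρ).1
    _ ≲ fun f => lq r fun n =>
          T n * (⨆ j, (Iic n).indicator (fun j => decay (-ε) n j * ωκ f j) j) + T n * ρJ f n := by
        subst hρ
        simp only [← mul_add]
        exact .lq (hupper.mul_left _)
    _ ≲ fun f => lq r fun n => T n * ρJ f n :=
        (lq_add_dominated _ _).trans <| .add_le ((lq_mul_iSup_Iic_dominated hr hε hT ωκ).trans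
          (.of_le fun f => lq_mono fun n => mul_le_mul_right (hωκ f n) _)) (.of_le fun _ => le_rfl)
    _ ≲ _ := (normR_comparable_lq_comp hr hq ha hb hδ hV hρ).2

theorem normK_comparable_normR (hX : IsOfClass N₀ N₁ X θ₀ c) (hN₀ : IsQuasiNorm N₀)
    (hN₁ : IsQuasiNorm N₁) (hr : r ≠ 0) (hq : q ≠ 0) (ha : IsSlow a) (hb : IsSlow b)
    (hc : IsSlow c) (h₀ : 0 < θ₀) (h₀₁ : θ₀ < θ₁) (h₁ : θ₁ < 1) (hθ : 0 < θ)
    (hρ : ρ = fun t => t ^ (θ₁ - θ₀) * (c t / b t)) :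
    normK X (normK N₀ N₁ θ₁ q b) θ r a ≲≳
      normR N₀ N₁ θ₁ r q (fun t => b t * (ρ t ^ (1 - θ) * a (ρ t))) b :=
  ⟨hX.normK_dominated_normR hN₀ hN₁ hr hq ha hb hc h₀ h₀₁ h₁ hθ hρ,
    hX.normR_dominated_normK hN₀ hN₁ hr hq ha hb hc h₀₁ hρ⟩

theorem normK_comparable_normK (hX : IsOfClass N₀ N₁ X θ₀ c) (hN₀ : IsQuasiNorm N₀)
    (hN₁ : IsQuasiNorm N₁) (hr : r ≠ 0) (hq : q ≠ 0) (ha : IsSlow a) (hb : IsSlow b)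
    (hc : IsSlow c) (h₀ : 0 < θ₀) (h₀₁ : θ₀ < θ₁) (h₁ : θ₁ < 1) (hθ : 0 < θ) (hθ' : θ < 1)
    (hρ : ρ = fun t => t ^ (θ₁ - θ₀) * (c t / b t)) :
    normK X (normK N₀ N₁ θ₁ q b) θ r a ≲≳ normK N₀ N₁ ((1 - θ) * θ₀ + θ * θ₁) r
      fun t => c t ^ (1 - θ) * b t ^ θ * a (ρ t) := by
  have hρP : PotterBound (|θ₁ - θ₀| + 1) ρ := hρ ▸ (hc.div hb).potterBound_rpow_mul _
  have hV := ((hc.rpow (1 - θ)).mul (hb.rpow θ)).mul (ha.comp hρP (by positivity))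
  have hη : (1 - θ) * θ₀ + θ * θ₁ = θ₁ - (1 - θ) * (θ₁ - θ₀) := by ring
  have hκ : 0 < (1 - θ) * (θ₁ - θ₀) := mul_pos (sub_pos.2 hθ') (sub_pos.2 h₀₁)
  rw [hη]
  refine (hX.normK_comparable_normR hN₀ hN₁ hr hq ha hb hc h₀ h₀₁ h₁ hθ hρ).trans
    (normR_comparable_normK hr hq hb hV hκ fun t ht => ?_)
  have hbt := hb.pos ht
  have hct := hc.pos ht
  have hbθ : b t ^ θ = b t / b t ^ (1 - θ) := by
    rw [← Real.rpow_one_sub' hbt.le (by simpa using hθ.ne'), _root_.sub_sub_cancel]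
  have hρθ : ρ t ^ (1 - θ) =
      t ^ ((1 - θ) * (θ₁ - θ₀)) * (c t ^ (1 - θ) / b t ^ (1 - θ)) := by
    rw [hρ, Real.mul_rpow (by positivity) (by positivity), Real.div_rpow hct.le hbt.le,
      ← Real.rpow_mul ht.le, mul_comm (θ₁ - θ₀)]
  rw [hρθ, hbθ]
  ring

end IsOfClass

end Reiteration

theorem theorem24_general {G : Type*} [AddCommGroup G] {N₀ N₁ : G → ℝ≥0∞}
    (hN₀ : IsQuasiNorm N₀) (hN₁ : IsQuasiNorm N₁) {θ₀ θ₁ : ℝ} (hθ₀ : 0 < θ₀) (hθ₀₁ : θ₀ < θ₁)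
    (hθ₁ : θ₁ < 1) {q₀ r r₁ r₀ : ℝ≥0∞} (hq₀ : q₀ ≠ 0) (hr : r ≠ 0) (hr₁ : r₁ ≠ 0) (hr₀ : r₀ ≠ 0)
    {a a₀ b₀ b₁ : ℝ → ℝ} (ha : IsSlow a) (ha₀ : IsSlow a₀) (hb₀ : IsSlow b₀) (hb₁ : IsSlow b₁)
    (hfin : headNorm r₀ (fun s => b₀ s / a₀ s) 1 ≠ ∞) {c₀ ρ : ℝ → ℝ}
    (hc₀ : ∀ t, c₀ t = a₀ t * (headNorm r₀ (fun s => b₀ s / a₀ s) t).toReal)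
    (hρ : ∀ t, ρ t = t ^ (θ₁ - θ₀) * (c₀ t / b₁ t)) :
    (∀ θ : ℝ, 0 < θ → θ < 1 →
      EquivNorms (normK (normR N₀ N₁ θ₀ r₀ q₀ b₀ a₀) (normK N₀ N₁ θ₁ r₁ b₁) θ r a)
        (normK N₀ N₁ ((1 - θ) * θ₀ + θ * θ₁) r
          fun t => c₀ t ^ (1 - θ) * b₁ t ^ θ * a (ρ t))) ∧
    EquivNorms (normK (normR N₀ N₁ θ₀ r₀ q₀ b₀ a₀) (normK N₀ N₁ θ₁ r₁ b₁) 1 r a)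
      (normR N₀ N₁ θ₁ r r₁ (fun t => b₁ t * a (ρ t)) b₁) := by
  obtain rfl : c₀ = _ := funext hc₀
  have hslow := ha₀.mul ((hb₀.div ha₀).headNorm hr₀ hfin)
  have hX := isOfClass_normR (N₀ := N₀) (N₁ := N₁) (θ := θ₀) hr₀ hq₀ ha₀ hb₀ hfin
  refine ⟨fun θ hθ hθ' => (hX.normK_comparable_normK hN₀ hN₁ hr hr₁ ha hb₁ hslow hθ₀ hθ₀₁ hθ₁
    hθ hθ' (funext hρ)).equivNorms, ?_⟩
  simpa using (hX.normK_comparable_normR hN₀ hN₁ hr hr₁ ha hb₁ hslow hθ₀ hθ₀₁ hθ₁ one_pos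
    (funext hρ)).equivNorms

theorem theorem24
    (A₀ A₁ : QuasiBanach E)
    (hne : ∃ x : E, x ≠ 0 ∧ A₀.N x ≠ ∞ ∧ A₁.N x ≠ ∞)
    (θ₀ θ₁ : ℝ) (hθ₀ : 0 < θ₀) (hθ₀₁ : θ₀ < θ₁) (hθ₁ : θ₁ < 1)
    (q₀ r r₁ r₀ : ℝ≥0∞) (hq₀ : 0 < q₀) (hr : 0 < r) (hr₁ : 0 < r₁) (hr₀ : 0 < r₀)
    (a a₀ b₀ b₁ : ℝ → ℝ)
    (h_sv_a : SlowlyVarying a)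
    (h_sv_a₀ : SlowlyVarying a₀)
    (h_sv_b₀ : SlowlyVarying b₀)
    (h_sv_b₁ : SlowlyVarying b₁)
    (hfin : LqNorm r₀ (Ioo 0 1) (svWgt r₀ (fun s => b₀ s / a₀ s)) ≠ ∞)
    (c₀ ρ : ℝ → ℝ)
    (hc₀ : ∀ t, c₀ t = a₀ t * (LqNorm r₀ (Ioo 0 t) (svWgt r₀ (fun s => b₀ s / a₀ s))).toReal)
    (hρ : ∀ t, ρ t = t ^ (θ₁ - θ₀) * (c₀ t / b₁ t)) :
    (∀ θ : ℝ, 0 < θ → θ < 1 →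
      EquivNorms
        (normK (normR A₀.N A₁.N θ₀ r₀ q₀ b₀ a₀) (normK A₀.N A₁.N θ₁ r₁ b₁) θ r a)
        (normK A₀.N A₁.N ((1 - θ) * θ₀ + θ * θ₁) r
          (fun t => c₀ t ^ (1 - θ) * b₁ t ^ θ * a (ρ t)))) ∧
    (LqNorm r (Ioo 0 1) (svWgt r (fun s => a s)) ≠ ∞ →
      EquivNorms
        (normK (normR A₀.N A₁.N θ₀ r₀ q₀ b₀ a₀) (normK A₀.N A₁.N θ₁ r₁ b₁) 1 r a)
        (normR A₀.N A₁.N θ₁ r r₁ (fun t => b₁ t * a (ρ t)) b₁)) := by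
  have h := theorem24_general A₀.isQuasiNorm A₁.isQuasiNorm hθ₀ hθ₀₁ hθ₁ hq₀.ne' hr.ne' hr₁.ne'
    hr₀.ne' h_sv_a.isSlow h_sv_a₀.isSlow h_sv_b₀.isSlow h_sv_b₁.isSlow hfin hc₀ hρ
  exact ⟨h.1, fun _ => h.2⟩

end
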